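/- arXiv:2405.05664 — 6 statements merged into one kernel-verified Lean document; each statement's English description precedes it below -/
import Mathlib

section
/- Let a<b be real numbers, q ∈ L¹([a,b]) with q ≥ 0 a.e. and q ≢ 0, and let g satisfy (g₊). Suppose that for every α ∈ dom B with B(α) = b one has ∂_α u(b;α) < 0. Then the Dirichlet problem u'' + q(t) g(u) = 0, u(a) = 0 = u(b), has at most one positive solution. -/
open Set MeasureTheory Filter Topology

/-- Carathéodory solution of `u'' + F(t, u) = 0` on `[a,b]`:
`u'` is the derivative of `u`, it is absolutely continuous (being an indefinite
integral of the integrable function `-F(·, u(·))`), and the equation holds a.e. -/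
def IsCaraSol (a b : ℝ) (F : ℝ → ℝ → ℝ) (u u' : ℝ → ℝ) : Prop :=
  (∀ t ∈ Set.Icc a b, HasDerivAt u (u' t) t) ∧
  IntervalIntegrable (fun s => F s (u s)) MeasureTheory.volume a b ∧
  ∀ t ∈ Set.Icc a b, u' t = u' a - ∫ s in a..t, F s (u s)

/-- The domain of the first-zero map `B` of the shooting method. -/
def domB (a b : ℝ) (U : ℝ → ℝ → ℝ) : Set ℝ :=
  {α : ℝ | 0 < α ∧ ∃ t ∈ Set.Ioc a b, U α t = 0}

/-- The first zero `B(α)` in `(a,b]` of the solution `u(·;α)`. -/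
noncomputable def firstZero (a b : ℝ) (U : ℝ → ℝ → ℝ) (α : ℝ) : ℝ :=
  sInf {t | t ∈ Set.Ioc a b ∧ U α t = 0}

theorem aux_antitone {a b : ℝ} {F : ℝ → ℝ → ℝ} {u u' : ℝ → ℝ}
    (hF : ∀ᵐ t ∂(volume.restrict (Set.Icc a b)), ∀ x, 0 ≤ F t x)
    (h : IsCaraSol a b F u u') : AntitoneOn u' (Set.Icc a b) := by
  obtain ⟨_, h2, h3⟩ := h
  intro s hs t ht hst
  have hab : a ≤ b := hs.1.trans hs.2
  have has : IntervalIntegrable (fun s => F s (u s)) volume a s :=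
    h2.mono_set (by rw [uIcc_of_le hs.1, uIcc_of_le hab]; exact Icc_subset_Icc le_rfl hs.2)
  have hst' : IntervalIntegrable (fun s => F s (u s)) volume s t :=
    h2.mono_set (by rw [uIcc_of_le hst, uIcc_of_le hab]; exact Icc_subset_Icc hs.1 ht.2)
  have e := intervalIntegral.integral_add_adjacent_intervals has hst'
  have hn : 0 ≤ ∫ x in s..t, F x (u x) := by
    apply intervalIntegral.integral_nonneg_of_ae_restrict hst
    have := ae_restrict_of_ae_restrict_of_subset (Icc_subset_Icc hs.1 ht.2) hF
    filter_upwards [this] with x hx using hx _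
  rw [h3 s hs, h3 t ht]
  linarith

theorem aux_concave {a b : ℝ} {F : ℝ → ℝ → ℝ} {u u' : ℝ → ℝ}
    (hF : ∀ᵐ t ∂(volume.restrict (Set.Icc a b)), ∀ x, 0 ≤ F t x)
    (h : IsCaraSol a b F u u') : ConcaveOn ℝ (Set.Icc a b) u := by
  have ha := aux_antitone hF h
  apply AntitoneOn.concaveOn_of_deriv (convex_Icc a b)
  · exact fun t ht => (h.1 t ht).continuousAt.continuousWithinAt
  · exact fun t ht => (h.1 t (interior_subset ht)).differentiableAt.differentiableWithinAt
  · intro s hs t ht hst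
    rw [(h.1 s (interior_subset hs)).deriv, (h.1 t (interior_subset ht)).deriv]
    exact ha (interior_subset hs) (interior_subset ht) hst

theorem aux_slope_pos {a b : ℝ} (hab : a < b) {F : ℝ → ℝ → ℝ} {u u' : ℝ → ℝ}
    (hF : ∀ᵐ t ∂(volume.restrict (Set.Icc a b)), ∀ x, 0 ≤ F t x)
    (h : IsCaraSol a b F u u') (h0 : u a = 0) (hp : ∀ t ∈ Set.Ioo a b, 0 < u t) :
    0 < u' a := by
  by_contra hc
  push Not at hc
  have ha := aux_antitone hF h
  have hanti : AntitoneOn u (Set.Icc a b) := by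
    apply antitoneOn_of_deriv_nonpos (convex_Icc a b)
    · exact fun t ht => (h.1 t ht).continuousAt.continuousWithinAt
    · exact fun t ht => (h.1 t (interior_subset ht)).differentiableAt.differentiableWithinAt
    · intro t ht
      have ht' := interior_subset ht
      rw [(h.1 t ht').deriv]
      exact (ha (left_mem_Icc.2 hab.le) ht' ht'.1).trans hc
  have h1 := hp ((a + b) / 2) ⟨by linarith, by linarith⟩
  have h2 := hanti (left_mem_Icc.2 hab.le) (show (a + b) / 2 ∈ Icc a b from ⟨by linarith, by linarith⟩)
    (by linarith)
  linarith

theorem aux_ev_pos {f : ℝ → ℝ} {c d : ℝ} (hf : HasDerivAt f d c) (h0 : f c = 0) (hd : 0 < d) :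
    ∀ᶠ x in 𝓝[>] c, 0 < f x := by
  have := (hasDerivWithinAt_iff_tendsto_slope' (s := Ioi c) (by simp)).1 hf.hasDerivWithinAt
  filter_upwards [this.eventually (lt_mem_nhds hd), self_mem_nhdsWithin] with x hx hx'
  rw [slope_def_field, h0, sub_zero] at hx
  have hx'' : 0 < x - c := sub_pos.2 hx'
  exact (div_pos_iff_of_pos_right hx'').1 hx

theorem aux_ev_neg {f : ℝ → ℝ} {c d : ℝ} (hf : HasDerivAt f d c) (h0 : f c = 0) (hd : d < 0) :
    ∀ᶠ x in 𝓝[<] c, 0 < f x := by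
  have := (hasDerivWithinAt_iff_tendsto_slope' (s := Iio c) (by simp)).1 hf.hasDerivWithinAt
  filter_upwards [this.eventually (gt_mem_nhds hd), self_mem_nhdsWithin] with x hx hx'
  rw [slope_def_field, h0, sub_zero] at hx
  have hx'' : x - c < 0 := sub_neg.2 hx'
  by_contra hc
  push Not at hc
  exact absurd hx (not_lt.2 (div_nonneg_of_nonpos hc hx''.le))

theorem aux_pos {a b : ℝ} (hab : a < b) {F : ℝ → ℝ → ℝ} {u u' : ℝ → ℝ}
    (hF : ∀ᵐ t ∂(volume.restrict (Set.Icc a b)), ∀ x, 0 ≤ F t x)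
    (h : IsCaraSol a b F u u') (h0 : u a = 0) (hb : u b = 0) (hs : 0 < u' a) :
    ∀ t ∈ Set.Ioo a b, 0 < u t := by
  intro t ht
  have hc := aux_concave hF h
  have hev := aux_ev_pos (h.1 a (left_mem_Icc.2 hab.le)) h0 hs
  obtain ⟨s, hs1, hs2⟩ := (hev.and (Ioo_mem_nhdsGT ht.1)).exists
  have hsb : 0 < b - s := by linarith [hs2.2, ht.2]
  have key := hc.2 (show s ∈ Icc a b from ⟨hs2.1.le, by linarith⟩) (right_mem_Icc.2 hab.le)
    (show 0 ≤ (b - t) / (b - s) from div_nonneg (by linarith [ht.2]) hsb.le)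
    (show 0 ≤ (t - s) / (b - s) from div_nonneg (by linarith [hs2.2]) hsb.le)
    (by field_simp; ring)
  have e : ((b - t) / (b - s)) • s + ((t - s) / (b - s)) • b = t := by
    simp only [smul_eq_mul]; field_simp; ring
  rw [e, hb] at key
  simp only [smul_eq_mul, mul_zero, add_zero] at key
  exact lt_of_lt_of_le (mul_pos (div_pos (by linarith [ht.2]) hsb) hs1) key

theorem aux_zero {f f' : ℝ → ℝ} (hf : ∀ x > (0 : ℝ), HasDerivAt f (f' x) x)
    (hz : ∀ x > (0 : ℝ), f x = 0 → f' x < 0) {x y : ℝ} (hx : 0 < x) (hxy : x < y)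
    (hfx : f x = 0) (hfy : f y = 0) : False := by
  have h := image_le_of_deriv_right_lt_deriv_boundary (f := f) (f' := f') (a := x) (b := y)
    (B := fun _ => 0) (B' := fun _ => 0)
    (fun t ht => (hf t (hx.trans_le ht.1)).continuousAt.continuousWithinAt)
    (fun t ht => (hf t (hx.trans_le ht.1)).hasDerivWithinAt) hfx.le
    (fun t => hasDerivAt_const t 0)
    (fun t ht h => hz t (hx.trans_le ht.1) h)
  have hy := hx.trans hxy
  obtain ⟨s, hs1, hs2⟩ := ((aux_ev_neg (hf y hy) hfy (hz y hy hfy)).and (Ioo_mem_nhdsLT hxy)).exists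
  exact absurd (h ⟨hs2.1.le, hs2.2.le⟩) (not_le.2 hs1)

/-- If `∂_α u(b;α) < 0` whenever `B(α) = b`, then the Dirichlet
problem `u'' + q(t) g(u) = 0`, `u(a) = 0 = u(b)` has at most one positive solution. -/
theorem at_most_one_positive_solution_of_shooting
    (a b : ℝ) (hab : a < b)
    (q : ℝ → ℝ)
    (hq_int : IntegrableOn q (Set.Icc a b))
    (hq_nonneg : ∀ᵐ t ∂(volume.restrict (Set.Icc a b)), 0 ≤ q t)
    (hq_ne : ¬ (∀ᵐ t ∂(volume.restrict (Set.Icc a b)), q t = 0))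
    (g : ℝ → ℝ)
    (hg_C1 : ContDiffOn ℝ 1 g (Set.Ici 0))
    (hg0 : g 0 = 0)
    (hg_pos : ∀ s > 0, 0 < g s)
    (hg_ext : ∀ s ≤ (0 : ℝ), g s = 0)
    -- the shooting family `U α = u(·;α)`, with time-derivative `U' α` and
    -- derivative `DU α t = ∂_α u(t;α)` with respect to the initial slope:
    (U U' DU : ℝ → ℝ → ℝ)
    (hU_sol : ∀ α ≥ (0 : ℝ), IsCaraSol a b (fun s x => q s * g x) (U α) (U' α))
    (hU_init : ∀ α ≥ (0 : ℝ), U α a = 0 ∧ U' α a = α)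
    (hU_uniq : ∀ α ≥ (0 : ℝ), ∀ v v' : ℝ → ℝ,
        IsCaraSol a b (fun s x => q s * g x) v v' → v a = 0 → v' a = α →
        ∀ t ∈ Set.Icc a b, v t = U α t)
    (hDU : ∀ α > (0 : ℝ), ∀ t ∈ Set.Icc a b, HasDerivAt (fun β => U β t) (DU α t) α)
    -- the shooting hypothesis: `B(α) = b → ∂_α u(b;α) < 0` on `dom B`:
    (hshoot : ∀ α ∈ domB a b U, firstZero a b U α = b → DU α b < 0) :
    ∀ u u₁ v v₁ : ℝ → ℝ,
      IsCaraSol a b (fun s x => q s * g x) u u₁ → u a = 0 → u b = 0 →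
        (∀ t ∈ Set.Ioo a b, 0 < u t) →
      IsCaraSol a b (fun s x => q s * g x) v v₁ → v a = 0 → v b = 0 →
        (∀ t ∈ Set.Ioo a b, 0 < v t) →
      Set.EqOn u v (Set.Icc a b) := by
  intro u u₁ v v₁ hu hua hub hup hv hva hvb hvp
  have hg : ∀ x, 0 ≤ g x := fun x => by
    rcases le_or_gt x 0 with h | h
    · exact (hg_ext x h).ge
    · exact (hg_pos x h).le
  have hF : ∀ᵐ t ∂(volume.restrict (Set.Icc a b)), ∀ x, 0 ≤ (fun s x => q s * g x) t x := by
    filter_upwards [hq_nonneg] with t ht x using mul_nonneg ht (hg x)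
  have hbI : b ∈ Icc a b := right_mem_Icc.2 hab.le
  have hz : ∀ α > (0 : ℝ), U α b = 0 → DU α b < 0 := by
    intro α hα h
    obtain ⟨i1, i2⟩ := hU_init α hα.le
    have hpos := aux_pos hab hF (hU_sol α hα.le) i1 h (by rw [i2]; exact hα)
    refine hshoot α ⟨hα, b, ⟨hab, le_rfl⟩, h⟩ ?_
    have : {t | t ∈ Set.Ioc a b ∧ U α t = 0} = {b} := by
      ext t
      simp only [mem_setOf_eq, mem_singleton_iff]
      constructor
      · rintro ⟨ht, h0⟩
        by_contra hne
        exact (hpos t ⟨ht.1, lt_of_le_of_ne ht.2 hne⟩).ne' h0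
      · rintro rfl
        exact ⟨⟨hab, le_rfl⟩, h⟩
    rw [firstZero, this, csInf_singleton]
  have su := aux_slope_pos hab hF hu hua hup
  have sv := aux_slope_pos hab hF hv hva hvp
  have eu := hU_uniq _ su.le u u₁ hu hua rfl
  have ev := hU_uniq _ sv.le v v₁ hv hva rfl
  have zu : U (u₁ a) b = 0 := by rw [← eu b hbI, hub]
  have zv : U (v₁ a) b = 0 := by rw [← ev b hbI, hvb]
  have hd : ∀ α > (0 : ℝ), HasDerivAt (fun β => U β b) ((fun β => DU β b) α) α :=
    fun α hα => hDU α hα b hbI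
  rcases lt_trichotomy (u₁ a) (v₁ a) with h | h | h
  · exact (aux_zero hd hz su h zu zv).elim
  · intro t ht
    rw [eu t ht, ev t ht, h]
  · exact (aux_zero hd hz sv h zv zu).elim
end

section
/- Let a<b be real numbers, q ∈ L¹([a,b]) with q ≥ 0 a.e. and q ≢ 0, and let g satisfy (g₊). Then for every α ∈ dom B one has u'(B(α);α) < 0, the map B is continuously differentiable on its domain (one-sidedly at boundary points of the domain), and ∂_α B(α) = − ∂_α u(B(α);α) / u'(B(α);α). -/
open Set MeasureTheory Filter Topology

theorem aux_anti (a b : ℝ) (F : ℝ → ℝ → ℝ) (u u' : ℝ → ℝ)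
    (h : IsCaraSol a b F u u')
    (hF : ∀ᵐ t ∂(volume.restrict (Set.Icc a b)), 0 ≤ F t (u t)) :
    AntitoneOn u' (Icc a b) := by
  obtain ⟨-, hi, he⟩ := h
  intro s hs t ht hst
  have hab : a ≤ b := hs.1.trans hs.2
  rw [he s hs, he t ht]
  have i1 : IntervalIntegrable (fun s => F s (u s)) volume a s :=
    hi.mono_set (by rw [uIcc_of_le hs.1, uIcc_of_le hab]; exact Icc_subset_Icc le_rfl hs.2)
  have i2 : IntervalIntegrable (fun s => F s (u s)) volume s t :=
    hi.mono_set (by rw [uIcc_of_le hst, uIcc_of_le hab]; exact Icc_subset_Icc hs.1 ht.2)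
  have h1 := intervalIntegral.integral_add_adjacent_intervals i1 i2
  have h2 : 0 ≤ ∫ x in s..t, F x (u x) :=
    intervalIntegral.integral_nonneg_of_ae_restrict hst
      (ae_restrict_of_ae_restrict_of_subset (Icc_subset_Icc hs.1 ht.2) hF)
  linarith

/-- Facts about a concave function with positive initial slope and a zero. -/
theorem aux_zero_s1 (a b α : ℝ) (u u' : ℝ → ℝ)
    (hd : ∀ t ∈ Icc a b, HasDerivAt u (u' t) t) (hanti : AntitoneOn u' (Icc a b))
    (hα : 0 < α) (h0 : u a = 0) (h1 : u' a = α) (hex : ∃ t ∈ Ioc a b, u t = 0) :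
    sInf {t | t ∈ Ioc a b ∧ u t = 0} ∈ Ioc a b ∧
    u (sInf {t | t ∈ Ioc a b ∧ u t = 0}) = 0 ∧
    u' (sInf {t | t ∈ Ioc a b ∧ u t = 0}) < 0 ∧
    (∀ t ∈ Ioo a (sInf {t | t ∈ Ioc a b ∧ u t = 0}), 0 < u t) ∧
    (∀ t ∈ Ioc (sInf {t | t ∈ Ioc a b ∧ u t = 0}) b, u t < 0) := by
  obtain ⟨T, hT, hTz⟩ := hex
  have mvt : ∀ s t, a ≤ s → s < t → t ≤ b → ∃ c ∈ Ioo s t, u t - u s = u' c * (t - s) := by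
    intro s t has hst htb
    obtain ⟨c, hc, hce⟩ := exists_hasDerivAt_eq_slope u u' hst
      (fun x hx => (hd x ⟨has.trans hx.1, hx.2.trans htb⟩).continuousAt.continuousWithinAt)
      (fun x hx => hd x ⟨has.trans hx.1.le, hx.2.le.trans htb⟩)
    refine ⟨c, hc, ?_⟩
    have : t - s ≠ 0 := by linarith
    rw [hce]; field_simp
  -- a zero of negative slope at every zero
  have key : ∀ z ∈ Ioc a b, u z = 0 → u' z < 0 ∧ (∀ t ∈ Ioo a z, 0 < u t) ∧
      (∀ t ∈ Ioc z b, u t < 0) := by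
    intro z hz hzz
    have hpos : ∀ᶠ t in 𝓝[>] a, 0 < u t := by
      have hs := (hd a ⟨le_rfl, hz.1.le.trans hz.2⟩).hasDerivWithinAt (s := Ioi a)
      rw [hasDerivWithinAt_iff_tendsto_slope' (by simp), h1] at hs
      filter_upwards [hs.eventually (lt_mem_nhds hα), self_mem_nhdsWithin] with t ht hta
      rw [slope_def_field, h0, sub_zero] at ht
      have : 0 < t - a := sub_pos.2 hta
      exact (div_pos_iff_of_pos_right this).1 ht
    -- no nonpositive value before z
    have hneg : u' z < 0 := by
      obtain ⟨p, hp, hpz⟩ := (hpos.and (Ioo_mem_nhdsGT hz.1)).exists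
      obtain ⟨c, hc, hce⟩ := mvt p z hpz.1.le hpz.2 hz.2
      have hc' : u' c < 0 := by
        have : 0 < z - p := by linarith [hpz.2]
        by_contra hcon
        push Not at hcon
        nlinarith [mul_nonneg hcon this.le]
      exact (hanti ⟨by linarith [hc.1, hpz.1], by linarith [hc.2, hz.2]⟩ ⟨hz.1.le, hz.2⟩
        hc.2.le).trans_lt hc'
    refine ⟨hneg, ?_, ?_⟩
    · intro t ht
      by_contra hcon
      push Not at hcon
      obtain ⟨p, hp, hpz⟩ := (hpos.and (Ioo_mem_nhdsGT ht.1)).exists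
      obtain ⟨c, hc, hce⟩ := mvt p t hpz.1.le hpz.2 (ht.2.le.trans hz.2)
      obtain ⟨d, hdd, hde⟩ := mvt t z ht.1.le ht.2 hz.2
      have h3 : u' d ≤ u' c := hanti ⟨by linarith [hc.1, hpz.1], by linarith [hc.2, hz.2, ht.2]⟩
        ⟨by linarith [hdd.1, ht.1], by linarith [hdd.2, hz.2]⟩ (by linarith [hc.2, hdd.1])
      have hp1 : 0 < t - p := by linarith [hpz.2]
      have hp2 : 0 < z - t := by linarith [ht.2]
      have : u' c < 0 := by
        by_contra hcc
        push Not at hcc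
        nlinarith [mul_nonneg hcc hp1.le]
      nlinarith [mul_pos (neg_pos.2 (h3.trans_lt this)) hp2]
    · intro t ht
      obtain ⟨c, hc, hce⟩ := mvt z t hz.1.le ht.1 ht.2
      have h3 : u' c ≤ u' z := hanti ⟨hz.1.le, hz.2⟩
        ⟨by linarith [hc.1, hz.1], by linarith [hc.2, ht.2]⟩ hc.1.le
      have hp2 : 0 < t - z := by linarith [ht.1]
      nlinarith [mul_pos (neg_pos.2 (h3.trans_lt hneg)) hp2]
  have hset : {t | t ∈ Ioc a b ∧ u t = 0} = {T} := by
    ext t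
    simp only [mem_setOf_eq, mem_singleton_iff]
    constructor
    · rintro ⟨ht, htz⟩
      obtain ⟨-, k1, k2⟩ := key T hT hTz
      rcases lt_trichotomy t T with h | h | h
      · exact absurd htz (k1 t ⟨ht.1, h⟩).ne'
      · exact h
      · exact absurd htz (k2 t ⟨h, ht.2⟩).ne
    · rintro rfl
      exact ⟨hT, hTz⟩
  rw [hset, csInf_singleton]
  exact ⟨hT, hTz, key T hT hTz⟩

/-- For `α ∈ dom B` one has `u'(B(α);α) < 0`, the map `B` is
continuously differentiable on its domain (in the sense of derivatives within
the domain), and `B'(α) = - ∂_α u(B(α);α) / u'(B(α);α)`. -/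
theorem firstZero_continuously_differentiable
    (a b : ℝ) (hab : a < b)
    (q : ℝ → ℝ)
    (hq_int : IntegrableOn q (Set.Icc a b))
    (hq_nonneg : ∀ᵐ t ∂(volume.restrict (Set.Icc a b)), 0 ≤ q t)
    (hq_ne : ¬ (∀ᵐ t ∂(volume.restrict (Set.Icc a b)), q t = 0))
    (g : ℝ → ℝ)
    (hg_C1 : ContDiffOn ℝ 1 g (Set.Ici 0))
    (hg0 : g 0 = 0)
    (hg_pos : ∀ s > 0, 0 < g s)
    (hg_ext : ∀ s ≤ (0 : ℝ), g s = 0)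
    -- the shooting family `U α = u(·;α)`, with time-derivative `U' α` and
    -- derivative `DU α t = ∂_α u(t;α)` with respect to the initial slope:
    (U U' DU : ℝ → ℝ → ℝ)
    (hU_sol : ∀ α ≥ (0 : ℝ), IsCaraSol a b (fun s x => q s * g x) (U α) (U' α))
    (hU_init : ∀ α ≥ (0 : ℝ), U α a = 0 ∧ U' α a = α)
    (hU_uniq : ∀ α ≥ (0 : ℝ), ∀ v v' : ℝ → ℝ,
        IsCaraSol a b (fun s x => q s * g x) v v' → v a = 0 → v' a = α →
        ∀ t ∈ Set.Icc a b, v t = U α t)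
    (hDU : ∀ α > (0 : ℝ), ∀ t ∈ Set.Icc a b, HasDerivAt (fun β => U β t) (DU α t) α)
    -- continuous dependence of `u`, `u'` and `∂_α u` on `(α, t)`:
    (hU_cont : ContinuousOn (fun p : ℝ × ℝ => U p.1 p.2) (Set.Ioi 0 ×ˢ Set.Icc a b))
    (hU'_cont : ContinuousOn (fun p : ℝ × ℝ => U' p.1 p.2) (Set.Ioi 0 ×ˢ Set.Icc a b))
    (hDU_cont : ContinuousOn (fun p : ℝ × ℝ => DU p.1 p.2) (Set.Ioi 0 ×ˢ Set.Icc a b)) :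
    (∀ α ∈ domB a b U, U' α (firstZero a b U α) < 0) ∧
    ∃ B' : ℝ → ℝ,
      ContinuousOn B' (domB a b U) ∧
      ∀ α ∈ domB a b U,
        HasDerivWithinAt (firstZero a b U) (B' α) (domB a b U) α ∧
        B' α = - DU α (firstZero a b U α) / U' α (firstZero a b U α) := by
  have hgnn : ∀ x, 0 ≤ g x := fun x => by
    rcases le_or_gt x 0 with h | h
    · exact (hg_ext x h).ge
    · exact (hg_pos x h).le
  set B := firstZero a b U with hB
  have facts : ∀ α ∈ domB a b U, B α ∈ Ioc a b ∧ U α (B α) = 0 ∧ U' α (B α) < 0 ∧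
      (∀ t ∈ Ioo a (B α), 0 < U α t) ∧ (∀ t ∈ Ioc (B α) b, U α t < 0) := by
    intro α hα
    exact aux_zero_s1 a b α (U α) (U' α) (hU_sol α hα.1.le).1
      (aux_anti a b _ _ _ (hU_sol α hα.1.le)
        (hq_nonneg.mono fun t ht => mul_nonneg ht (hgnn _))) hα.1
      (hU_init α hα.1.le).1 (hU_init α hα.1.le).2 hα.2
  have hBcont : ContinuousOn B (domB a b U) := by
    intro α hα
    obtain ⟨hm, hz, hn, hlt, hgt⟩ := facts α hα
    have hc : ∀ t ∈ Icc a b, ContinuousWithinAt (fun β => U β t) (domB a b U) α :=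
      fun t ht => (hDU α hα.1 t ht).continuousAt.continuousWithinAt
    refine tendsto_order.2 ⟨fun x hx => ?_, fun x hx => ?_⟩
    · obtain ⟨t, ht1, ht2⟩ := exists_between (max_lt hx hm.1)
      have hta : a < t := (le_max_right _ _).trans_lt ht1
      have htb : t ≤ b := ht2.le.trans hm.2
      filter_upwards [(hc t ⟨hta.le, htb⟩).eventually (lt_mem_nhds (hlt t ⟨hta, ht2⟩)),
        self_mem_nhdsWithin] with β hβ hβd
      obtain ⟨-, hz', -, -, hgt'⟩ := facts β hβd
      refine ((le_max_left _ _).trans_lt ht1).trans ?_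
      by_contra hcon
      rcases (not_lt.1 hcon).eq_or_lt with h | h
      · rw [h] at hz'; exact hβ.ne' hz'
      · exact absurd (hgt' t ⟨h, htb⟩) hβ.le.not_gt
    · rcases lt_or_ge b x with h | h
      · filter_upwards [self_mem_nhdsWithin] with β hβd
        exact (facts β hβd).1.2.trans_lt h
      · have hax : a < x := hm.1.trans hx
        filter_upwards [(hc x ⟨hax.le, h⟩).eventually (gt_mem_nhds (hgt x ⟨hx, h⟩)),
          self_mem_nhdsWithin] with β hβ hβd
        obtain ⟨-, hz', -, hlt', -⟩ := facts β hβd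
        by_contra hcon
        rcases (not_lt.1 hcon).eq_or_lt with h | h
        · rw [← h] at hz'; exact hβ.ne hz'
        · exact absurd (hlt' x ⟨hax, h⟩) hβ.le.not_gt
  have hpair : ContinuousOn (fun α => (α, B α)) (domB a b U) := continuousOn_id.prodMk hBcont
  have hmaps : MapsTo (fun α => (α, B α)) (domB a b U) (Ioi 0 ×ˢ Icc a b) :=
    fun α hα => ⟨hα.1, Ioc_subset_Icc_self (facts α hα).1⟩
  refine ⟨fun α hα => (facts α hα).2.2.1,
    fun α => - DU α (B α) / U' α (B α), ?_, fun α hα => ⟨?_, rfl⟩⟩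
  · exact ((hDU_cont.comp hpair hmaps).neg).div (hU'_cont.comp hpair hmaps)
      fun α hα => (facts α hα).2.2.1.ne
  · obtain ⟨hm, hz, hn, -, -⟩ := facts α hα
    have hxi : ∀ β, ∃ ξ, β ∈ domB a b U → ξ ∈ uIcc (B α) (B β) ∧
        U β (B β) - U β (B α) = U' β ξ * (B β - B α) := by
      intro β
      by_cases hβ : β ∈ domB a b U
      swap
      · exact ⟨0, fun h => absurd h hβ⟩
      have hd := (hU_sol β hβ.1.le).1
      have hm' := (facts β hβ).1
      have mvt : ∀ s t, a ≤ s → s < t → t ≤ b →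
          ∃ c ∈ Icc s t, U β t - U β s = U' β c * (t - s) := by
        intro s t has hst htb
        obtain ⟨c, hc, hce⟩ := exists_hasDerivAt_eq_slope (U β) (U' β) hst
          (fun x hx => (hd x ⟨has.trans hx.1, hx.2.trans htb⟩).continuousAt.continuousWithinAt)
          (fun x hx => hd x ⟨has.trans hx.1.le, hx.2.le.trans htb⟩)
        refine ⟨c, Ioo_subset_Icc_self hc, ?_⟩
        have : t - s ≠ 0 := by linarith
        rw [hce]; field_simp
      rcases lt_trichotomy (B α) (B β) with h | h | h
      · obtain ⟨c, hc, hce⟩ := mvt _ _ hm.1.le h hm'.2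
        exact ⟨c, fun _ => ⟨Icc_subset_uIcc hc, hce⟩⟩
      · exact ⟨B α, fun _ => ⟨left_mem_uIcc, by rw [h]; ring⟩⟩
      · obtain ⟨c, hc, hce⟩ := mvt _ _ hm'.1.le h hm.2
        exact ⟨c, fun _ => ⟨Icc_subset_uIcc' hc, by linarith⟩⟩
    choose ξ hξ using hxi
    have hBα : Tendsto B (𝓝[domB a b U] α) (𝓝 (B α)) := hBcont α hα
    have hξt : Tendsto ξ (𝓝[domB a b U] α) (𝓝 (B α)) := by
      rw [tendsto_iff_dist_tendsto_zero] at hBα ⊢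
      refine squeeze_zero' (Eventually.of_forall fun _ => dist_nonneg) ?_ hBα
      filter_upwards [self_mem_nhdsWithin] with β hβ
      rw [Real.dist_eq, Real.dist_eq]
      exact abs_sub_left_of_mem_uIcc (hξ β hβ).1
    have hU't : Tendsto (fun β => U' β (ξ β)) (𝓝[domB a b U] α) (𝓝 (U' α (B α))) := by
      refine (hU'_cont (α, B α) (hmaps hα)).tendsto.comp
        (f := fun β => (β, ξ β)) (tendsto_nhdsWithin_iff.2 ⟨?_, ?_⟩)
      · exact (tendsto_id.mono_left nhdsWithin_le_nhds).prodMk_nhds hξt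
      · filter_upwards [self_mem_nhdsWithin] with β hβ
        refine ⟨hβ.1, ?_⟩
        exact (uIcc_subset_Icc (hmaps hα).2 (hmaps hβ).2) (hξ β hβ).1
    rw [hasDerivWithinAt_iff_tendsto_slope]
    have hle : 𝓝[domB a b U \ {α}] α ≤ 𝓝[domB a b U] α := nhdsWithin_mono _ diff_subset
    have hsl := ((hDU α hα.1 (B α) (hmaps hα).2).hasDerivWithinAt (s := domB a b U))
    rw [hasDerivWithinAt_iff_tendsto_slope] at hsl
    refine (hsl.neg.div (hU't.mono_left hle) hn.ne).congr' ?_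
    filter_upwards [self_mem_nhdsWithin, (hU't.mono_left hle).eventually (gt_mem_nhds hn)]
      with β hβ hβn
    have e := (hξ β hβ.1).2
    rw [(facts β hβ.1).2.1] at e
    have hne : β - α ≠ 0 := sub_ne_zero.2 hβ.2
    have hne2 := hβn.ne
    simp only [Pi.neg_apply, Pi.div_apply, slope_def_field]
    rw [hz]
    field_simp
    linarith
end

section
/- Let a<b be real numbers, q ∈ L¹([a,b]) with q ≥ 0 a.e. and q ≢ 0, and let g satisfy (g₊) and (g_s). Then for every α > 0 with α ∈ dom B, the function t ↦ ∂_α u(t;α) has at least one zero in the open interval (a, B(α)). -/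
open Set MeasureTheory Filter Topology

lemma aux_C1_ac {a c : ℝ} (hac : a ≤ c) {u u' : ℝ → ℝ}
    (hu : ∀ t ∈ Icc a c, HasDerivAt u (u' t) t) (hc : ContinuousOn u' (Icc a c)) :
    AbsolutelyContinuousOnInterval u a c := by
  obtain ⟨C, hC⟩ := isCompact_Icc.exists_bound_of_continuousOn hc
  have : LipschitzOnWith (Real.toNNReal C) u (uIcc a c) := by
    rw [uIcc_of_le hac]
    apply Convex.lipschitzOnWith_of_nnnorm_hasDerivWithin_le (convex_Icc a c)
      (fun t ht => (hu t ht).hasDerivWithinAt)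
    intro t ht
    rw [← NNReal.coe_le_coe, coe_nnnorm]
    exact (hC t ht).trans (Real.le_coe_toNNReal C)
  exact this.absolutelyContinuousOnInterval

lemma aux_prim_cont {a c k : ℝ} (hac : a ≤ c) {u' p : ℝ → ℝ}
    (hp : IntervalIntegrable p volume a c)
    (h : ∀ t ∈ Icc a c, u' t = k - ∫ s in a..t, p s) : ContinuousOn u' (Icc a c) := by
  have h1 := (hp.absolutelyContinuousOnInterval_intervalIntegral (c := a) (by simp)).continuousOn
  rw [uIcc_of_le hac] at h1
  exact (continuousOn_const.sub h1).congr h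

lemma aux_wronskian {a c k l : ℝ} (hac : a ≤ c) {u u' v v' p r : ℝ → ℝ}
    (hu : ∀ t ∈ Icc a c, HasDerivAt u (u' t) t)
    (hv : ∀ t ∈ Icc a c, HasDerivAt v (v' t) t)
    (hp : IntervalIntegrable p volume a c) (hr : IntervalIntegrable r volume a c)
    (hu' : ∀ t ∈ Icc a c, u' t = k - ∫ s in a..t, p s)
    (hv' : ∀ t ∈ Icc a c, v' t = l - ∫ s in a..t, r s) :
    ∫ s in a..c, (u s * r s - p s * v s) =
      (u' c * v c - u c * v' c) - (u' a * v a - u a * v' a) := by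
  have hP := hp.absolutelyContinuousOnInterval_intervalIntegral (c := a) (by simp)
  have hR := hr.absolutelyContinuousOnInterval_intervalIntegral (c := a) (by simp)
  have hk (k : ℝ) : AbsolutelyContinuousOnInterval (fun _ : ℝ => k) a c :=
    ((LipschitzWith.const k).lipschitzOnWith (s := uIcc a c)).absolutelyContinuousOnInterval
  have uac := aux_C1_ac hac hu (aux_prim_cont hac hp hu')
  have vac := aux_C1_ac hac hv (aux_prim_cont hac hr hv')
  have F := (((hk k).fun_sub hP).fun_mul vac).fun_sub (uac.fun_mul ((hk l).fun_sub hR))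
  have E := F.integral_deriv_eq_sub
  rw [hu' c (by simp [hac]), hv' c (by simp [hac]), hu' a (by simp [hac]), hv' a (by simp [hac]), ← E]
  apply intervalIntegral.integral_congr_ae
  filter_upwards [hp.ae_hasDerivAt_integral, hr.ae_hasDerivAt_integral] with x hx1 hx2 hx3
  have hx4 : x ∈ uIcc a c := uIoc_subset_uIcc hx3
  have d1 := hx1 hx4 a (by simp)
  have d2 := hx2 hx4 a (by simp)
  rw [uIcc_of_le hac] at hx4
  have := (((d1.const_sub k).mul (hv x hx4)).sub ((hu x hx4).mul (d2.const_sub l))).deriv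
  refine Eq.trans ?_ this.symm
  rw [hu' x hx4, hv' x hx4]
  ring

lemma aux_exp {a c K : ℝ} {q : ℝ → ℝ} (hac : a ≤ c) (hq : IntervalIntegrable q volume a c) :
    AbsolutelyContinuousOnInterval (fun t => Real.exp (K * ∫ s in a..t, q s)) a c ∧
    ∫ s in a..c, K * q s * Real.exp (K * ∫ s in a..s, q s) =
      Real.exp (K * ∫ s in a..c, q s) - 1 := by
  have hP := (hq.absolutelyContinuousOnInterval_intervalIntegral (c := a) (by simp)).const_mul K
  obtain ⟨R, hR⟩ := hP.exists_bound
  obtain ⟨C, hC⟩ := (Real.contDiff_exp (n := 1)).contDiffOn.exists_lipschitzOnWith (by decide)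
    (convex_Icc (-R) R) isCompact_Icc
  have hF : AbsolutelyContinuousOnInterval (fun t => Real.exp (K * ∫ s in a..t, q s)) a c := by
    have h0 : Tendsto (fun E : ℕ × (ℕ → ℝ × ℝ) => (C:ℝ) * ∑ i ∈ Finset.range E.1, dist (K * ∫ s in a..(E.2 i).1, q s) (K * ∫ s in a..(E.2 i).2, q s))
        (AbsolutelyContinuousOnInterval.totalLengthFilter ⊓ 𝓟 (AbsolutelyContinuousOnInterval.disjWithin a c)) (𝓝 0) := by
      have := Tendsto.const_mul (C:ℝ) hP
      rwa [mul_zero] at this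
    apply squeeze_zero' (Eventually.of_forall fun E => Finset.sum_nonneg fun i _ => dist_nonneg) _ h0
    filter_upwards [mem_inf_of_right (mem_principal_self _)] with E hE
    rw [Finset.mul_sum]
    apply Finset.sum_le_sum
    intro i hi
    have := hE.1 i hi
    exact hC.dist_le_mul _ (abs_le.1 (hR _ this.1)) _ (abs_le.1 (hR _ this.2))
  refine ⟨hF, ?_⟩
  have := hF.integral_deriv_eq_sub
  simp only [intervalIntegral.integral_same, mul_zero, Real.exp_zero] at this
  rw [← this]
  apply intervalIntegral.integral_congr_ae
  filter_upwards [hq.ae_hasDerivAt_integral] with x hx1 hx3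
  have hx4 : x ∈ uIcc a c := uIoc_subset_uIcc hx3
  have d1 := ((hx1 hx4 a (by simp)).const_mul K).exp.deriv
  refine Eq.trans ?_ d1.symm
  ring

lemma aux_gronwall {a b L : ℝ} (hab : a ≤ b) (hL : 0 ≤ L) {q : ℝ → ℝ}
    (hq : IntervalIntegrable q volume a b)
    (hq0 : ∀ᵐ t, t ∈ Icc a b → 0 ≤ q t) :
    ∃ C : ℝ, 0 ≤ C ∧ ∀ (w w' r : ℝ → ℝ) (δ : ℝ), w a = 0 →
      (∀ t ∈ Icc a b, HasDerivAt w (w' t) t) →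
      IntervalIntegrable r volume a b →
      (∀ t ∈ Icc a b, w' t = δ - ∫ s in a..t, r s) →
      (∀ᵐ s, s ∈ Icc a b → |r s| ≤ L * q s * |w s|) →
      ∀ t ∈ Icc a b, |w t| ≤ C * |δ| ∧ |w' t| ≤ C * |δ| := by
  set K := 2 * (L * (b - a) + 1) with hK
  have hba : 0 ≤ b - a := by linarith
  have hK0 : 0 < K := by positivity
  set φ : ℝ → ℝ := fun t => Real.exp (K * ∫ s in a..t, q s) with hφ
  have hsub : ∀ s t, s ∈ Icc a b → t ∈ Icc a b → IntervalIntegrable q volume s t := by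
    intro s t hs ht
    apply hq.mono_set
    rw [uIcc_of_le hab]
    exact uIcc_subset_Icc hs ht
  have amem : a ∈ Icc a b := by simp [hab]
  have bmem : b ∈ Icc a b := by simp [hab]
  have hφmono : ∀ s t, s ∈ Icc a b → t ∈ Icc a b → s ≤ t → φ s ≤ φ t := by
    intro s t hs ht hst
    simp only [hφ]
    apply Real.exp_le_exp.2
    apply mul_le_mul_of_nonneg_left _ hK0.le
    rw [← intervalIntegral.integral_add_adjacent_intervals (hsub a s amem hs) (hsub s t hs ht)]
    have : 0 ≤ ∫ u in s..t, q u := by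
      apply intervalIntegral.integral_nonneg_of_ae_restrict hst
      rw [EventuallyLE, ae_restrict_iff' measurableSet_Icc]
      filter_upwards [hq0] with x hx hx2
      exact hx ⟨hs.1.trans hx2.1, hx2.2.trans ht.2⟩
    linarith
  have hφa : φ a = 1 := by simp [hφ]
  have hφpos : ∀ t, 0 < φ t := fun t => Real.exp_pos _
  have hφ1 : ∀ t ∈ Icc a b, 1 ≤ φ t := fun t ht => hφa ▸ hφmono a t amem ht ht.1
  have hφc : ContinuousOn φ (Icc a b) := by
    have := (aux_exp (K := K) hab hq).1.continuousOn
    rwa [uIcc_of_le hab] at this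
  refine ⟨2 * φ b * (1 + (b - a)), by have := hφpos b; positivity, ?_⟩
  intro w w' r δ hw0 hw hr hw' hrb
  have hwc := aux_prim_cont hab hr hw'
  obtain ⟨t0, ht0, hmax⟩ := isCompact_Icc.exists_isMaxOn ⟨a, amem⟩
    (hwc.abs.div hφc (fun t _ => (hφpos t).ne'))
  set M := |w' t0| / φ t0 with hM
  have hM0 : 0 ≤ M := div_nonneg (abs_nonneg _) (hφpos _).le
  have h1 : ∀ t ∈ Icc a b, |w' t| ≤ M * φ t := by
    intro t ht
    have := hmax ht
    simp only [mem_ofPred_eq, Pi.div_apply] at this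
    rwa [div_le_iff₀ (hφpos t)] at this
  have h2 : ∀ s ∈ Icc a b, |w s| ≤ (b - a) * (M * φ s) := by
    intro s hs
    have := Convex.norm_image_sub_le_of_norm_hasDerivWithin_le (f := w) (f' := w') (s := Icc a s)
      (C := M * φ s) (x := a) (y := s)
      (fun x hx => (hw x ⟨hx.1, hx.2.trans hs.2⟩).hasDerivWithinAt)
      (fun x hx => by
        have hx' : x ∈ Icc a b := ⟨hx.1, hx.2.trans hs.2⟩
        refine (h1 x hx').trans ?_
        exact mul_le_mul_of_nonneg_left (hφmono x s hx' hs hx.2) hM0)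
      (convex_Icc a s) (by simp [hs.1]) (by simp [hs.1])
    rw [hw0, sub_zero, Real.norm_eq_abs, Real.norm_eq_abs, abs_of_nonneg (a := s - a) (by linarith [hs.1])] at this
    refine this.trans ?_
    rw [mul_comm]
    apply mul_le_mul_of_nonneg_right (by linarith [hs.2])
    have := hφpos s
    positivity
  have h3 : ∀ t ∈ Icc a b, |w' t| ≤ |δ| + M / 2 * φ t := by
    intro t ht
    rw [hw' t ht]
    have hex := (aux_exp (K := K) ht.1 (hsub a t amem ht))
    have hc : ContinuousOn φ (uIcc a t) := hex.1.continuousOn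
    have hint : IntervalIntegrable (fun s => M / 2 * (K * q s * φ s)) volume a t :=
      (((hsub a t amem ht).const_mul K).mul_continuousOn hc).const_mul _
    have : ‖∫ s in a..t, r s‖ ≤ ∫ s in a..t, M / 2 * (K * q s * φ s) := by
      apply intervalIntegral.norm_integral_le_of_norm_le ht.1 _ hint
      filter_upwards [hrb, hq0] with s hs hqs hst
      have hs' : s ∈ Icc a b := ⟨hst.1.le, hst.2.trans ht.2⟩
      refine (hs hs').trans ?_
      have e1 := hqs hs'
      have e2 : 0 ≤ M * φ s := mul_nonneg hM0 (hφpos s).le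
      calc L * q s * |w s| ≤ L * q s * ((b - a) * (M * φ s)) :=
            mul_le_mul_of_nonneg_left (h2 s hs') (by positivity)
        _ ≤ L * q s * ((b - a) * (M * φ s)) + q s * (M * φ s) := by
            have := mul_nonneg e1 e2
            linarith
        _ = M / 2 * (K * q s * φ s) := by rw [hK]; ring
    rw [intervalIntegral.integral_const_mul, hex.2, Real.norm_eq_abs] at this
    have h4 := abs_sub δ (∫ s in a..t, r s)
    have h5 : M / 2 * (Real.exp (K * ∫ s in a..t, q s) - 1) ≤ M / 2 * φ t := by
      apply mul_le_mul_of_nonneg_left _ (by positivity)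
      simp [hφ]
    linarith
  have hMd : M ≤ 2 * |δ| := by
    have e1 := h3 t0 ht0
    have e2 : |w' t0| = M * φ t0 := by rw [hM]; field_simp [(hφpos t0).ne']
    have e3 := mul_le_mul_of_nonneg_left (hφ1 t0 ht0) hM0
    linarith
  intro t ht
  have k1 : M * φ t ≤ 2 * |δ| * φ b := mul_le_mul hMd (hφmono t b ht bmem ht.2) (hφpos t).le (by positivity)
  have k2 : 0 ≤ 2 * |δ| * φ b := by have := hφpos b; positivity
  have k3 := mul_nonneg hba k2
  have k4 := mul_le_mul_of_nonneg_left k1 hba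
  constructor
  · have := h2 t ht
    linarith
  · have := h1 t ht
    linarith

lemma aux_glip {g : ℝ → ℝ} (hg_C1 : ContDiffOn ℝ 1 g (Set.Ici 0)) (hg0 : g 0 = 0)
    (hg_ext : ∀ s ≤ (0 : ℝ), g s = 0) (M : ℝ) :
    ∃ L : ℝ, 0 ≤ L ∧ ∀ x ≤ M, ∀ y ≤ M, |g x - g y| ≤ L * |x - y| := by
  obtain ⟨K, hK⟩ := (hg_C1.mono (Icc_subset_Ici_self : Icc 0 (max M 0) ⊆ Ici 0)).exists_lipschitzOnWith
    (by decide) (convex_Icc _ _) isCompact_Icc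
  have hm : ∀ x, g x = g (max x 0) := by
    intro x
    rcases le_total x 0 with h | h
    · rw [max_eq_right h, hg0, hg_ext x h]
    · rw [max_eq_left h]
  refine ⟨K, K.2, fun x hx y hy => ?_⟩
  rw [hm x, hm y]
  refine (hK.dist_le_mul _ ⟨le_max_right _ _, max_le_max_right 0 hx⟩ _ ⟨le_max_right _ _, max_le_max_right 0 hy⟩).trans ?_
  exact mul_le_mul_of_nonneg_left (abs_max_sub_max_le_abs _ _ _) K.2

lemma aux_firstZero {a b α : ℝ} {U : ℝ → ℝ → ℝ} {u' : ℝ → ℝ} (h : α ∈ domB a b U)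
    (hu : ∀ t ∈ Icc a b, HasDerivAt (U α) (u' t) t) (ha : U α a = 0) (ha' : u' a = α) :
    a < firstZero a b U α ∧ firstZero a b U α ≤ b ∧ U α (firstZero a b U α) = 0 ∧
    ∀ t ∈ Ioo a (firstZero a b U α), 0 < U α t := by
  obtain ⟨hα, t0, ht0, hz⟩ := h
  set S := {t | t ∈ Set.Ioc a b ∧ U α t = 0} with hS
  have hBdef : firstZero a b U α = sInf S := rfl
  rw [hBdef]
  have hbdd : BddBelow S := ⟨a, fun t ht => ht.1.1.le⟩
  have hne : S.Nonempty := ⟨t0, ht0, hz⟩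
  have hab : a ≤ b := ht0.1.le.trans ht0.2
  have hcont : ContinuousOn (U α) (Icc a b) := fun t ht => (hu t ht).continuousAt.continuousWithinAt
  have hpos : ∀ᶠ t in 𝓝[>] a, 0 < U α t := by
    have h1 := (hu a ⟨le_rfl, hab⟩)
    rw [ha', hasDerivAt_iff_tendsto_slope] at h1
    have h2 := (h1.mono_left (nhdsWithin_mono a (fun x (hx : a < x) => ne_of_gt hx))).eventually
      (lt_mem_nhds hα)
    filter_upwards [h2, self_mem_nhdsWithin] with t ht hta
    rw [slope_def_field, ha, sub_zero] at ht
    have h3 : 0 < t - a := sub_pos.2 hta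
    exact (div_pos_iff_of_pos_right h3).1 ht
  obtain ⟨c, hc, hcp⟩ := mem_nhdsGT_iff_exists_Ioo_subset.1 hpos
  have hc : a < c := hc
  have hlow : ∀ t ∈ S, c ≤ t := by
    intro t ht
    by_contra hlt
    have := hcp ⟨ht.1.1, not_le.1 hlt⟩
    simp only [mem_ofPred_eq] at this
    exact this.ne' ht.2
  have hcB : c ≤ sInf S := le_csInf hne hlow
  have hmem : sInf S ∈ S := by
    have hcl : IsClosed S := by
      have : S = Icc c b ∩ U α ⁻¹' {0} := by
        ext t
        constructor
        · intro ht; exact ⟨⟨hlow t ht, ht.1.2⟩, ht.2⟩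
        · intro ht; exact ⟨⟨hc.trans_le ht.1.1, ht.1.2⟩, ht.2⟩
      rw [this]
      exact (hcont.mono (Icc_subset_Icc_left hc.le)).preimage_isClosed_of_isClosed isClosed_Icc
        isClosed_singleton
    exact hcl.csInf_mem hne hbdd
  refine ⟨hc.trans_le hcB, hmem.1.2, hmem.2, ?_⟩
  intro t ht
  by_contra hle
  have hle := not_lt.1 hle
  obtain ⟨d, hd1, hd2⟩ := exists_between (lt_min hc ht.1)
  have hd3 : 0 < U α d := hcp ⟨hd1, hd2.trans_le (min_le_left _ _)⟩
  have hdt : d ≤ t := (hd2.trans_le (min_le_right _ _)).le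
  have htb : t ≤ b := ht.2.le.trans hmem.1.2
  obtain ⟨z, hz1, hz2⟩ := intermediate_value_Icc' hdt (hcont.mono (Icc_subset_Icc hd1.le htb))
    (show (0:ℝ) ∈ Icc (U α t) (U α d) from ⟨hle, hd3.le⟩)
  have : sInf S ≤ z := csInf_le hbdd ⟨⟨hd1.trans_le hz1.1, hz1.2.trans htb⟩, hz2⟩
  linarith [hz1.2, ht.2]


/-- Under `(g₊)` and `(g_s)`, for every `α ∈ dom B` the function
`t ↦ ∂_α u(t;α)` has at least one zero in the open interval `(a, B(α))`. -/
theorem deriv_in_alpha_has_zero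
    (a b : ℝ) (hab : a < b)
    (q : ℝ → ℝ)
    (hq_int : IntegrableOn q (Set.Icc a b))
    (hq_nonneg : ∀ᵐ t ∂(volume.restrict (Set.Icc a b)), 0 ≤ q t)
    (hq_ne : ¬ (∀ᵐ t ∂(volume.restrict (Set.Icc a b)), q t = 0))
    (g : ℝ → ℝ)
    (hg_C1 : ContDiffOn ℝ 1 g (Set.Ici 0))
    (hg0 : g 0 = 0)
    (hg_pos : ∀ s > 0, 0 < g s)
    (hg_ext : ∀ s ≤ (0 : ℝ), g s = 0)
    -- condition (g_s): `g'(s) > g(s)/s` for all `s > 0`: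
    (hg_s : ∀ s > (0 : ℝ), g s / s < deriv g s)
    -- the shooting family `U α = u(·;α)`, with time-derivative `U' α` and
    -- derivative `DU α t = ∂_α u(t;α)` with respect to the initial slope:
    (U U' DU : ℝ → ℝ → ℝ)
    (hU_sol : ∀ α ≥ (0 : ℝ), IsCaraSol a b (fun s x => q s * g x) (U α) (U' α))
    (hU_init : ∀ α ≥ (0 : ℝ), U α a = 0 ∧ U' α a = α)
    (hU_uniq : ∀ α ≥ (0 : ℝ), ∀ v v' : ℝ → ℝ,
        IsCaraSol a b (fun s x => q s * g x) v v' → v a = 0 → v' a = α →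
        ∀ t ∈ Set.Icc a b, v t = U α t)
    (hDU : ∀ α > (0 : ℝ), ∀ t ∈ Set.Icc a b, HasDerivAt (fun β => U β t) (DU α t) α) :
    ∀ α ∈ domB a b U, ∃ t ∈ Set.Ioo a (firstZero a b U α), DU α t = 0 := by
  intro α hα
  have hα0 : 0 < α := hα.1
  have hqi : IntervalIntegrable q volume a b :=
    (intervalIntegrable_iff_integrableOn_Icc_of_le hab.le).2 hq_int
  have hq0 : ∀ᵐ t, t ∈ Icc a b → 0 ≤ q t := (ae_restrict_iff' measurableSet_Icc).1 hq_nonneg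
  have hgnn : ∀ x, 0 ≤ g x := by
    intro x
    rcases le_or_gt x 0 with h | h
    · rw [hg_ext x h]
    · exact (hg_pos x h).le
  obtain ⟨haB, hBb, hUB, hUpos⟩ := aux_firstZero hα (hU_sol α hα0.le).1 (hU_init α hα0.le).1
    (hU_init α hα0.le).2
  set B := firstZero a b U α with hBdef
  -- upper bound
  have hup : ∀ β ≥ (0:ℝ), ∀ t ∈ Icc a b, U β t ≤ β * (b - a) := by
    intro β hβ t ht
    obtain ⟨h1, h2, h3⟩ := hU_sol β hβ
    obtain ⟨i1, i2⟩ := hU_init β hβ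
    have hd : ∀ s ∈ Icc a b, U' β s ≤ β := by
      intro s hs
      rw [h3 s hs, i2]
      have : 0 ≤ ∫ x in a..s, q x * g (U β x) := by
        apply intervalIntegral.integral_nonneg_of_ae_restrict hs.1
        rw [EventuallyLE, ae_restrict_iff' measurableSet_Icc]
        filter_upwards [hq0] with x hx hx2
        exact mul_nonneg (hx ⟨hx2.1, hx2.2.trans hs.2⟩) (hgnn _)
      linarith
    have := (convex_Icc a b).image_sub_le_mul_sub_of_deriv_le (f := U β) (C := β)
      (fun x hx => (h1 x hx).continuousAt.continuousWithinAt)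
      (fun x hx => (h1 x (interior_subset hx)).differentiableAt.differentiableWithinAt)
      (fun x hx => by rw [(h1 x (interior_subset hx)).deriv]; exact hd x (interior_subset hx))
      a ⟨le_rfl, hab.le⟩ t ht ht.1
    rw [i1, sub_zero] at this
    exact this.trans (mul_le_mul_of_nonneg_left (by linarith [ht.2]) hβ)
  obtain ⟨L, hL0, hL⟩ := aux_glip hg_C1 hg0 hg_ext ((α + 1) * (b - a))
  obtain ⟨C, hC0, hC⟩ := aux_gronwall hab.le hL0 hqi hq0
  have hle : ∀ β, 0 ≤ β → β ≤ α + 1 → ∀ t ∈ Icc a b, U β t ≤ (α + 1) * (b - a) :=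
    fun β h0 h1 t ht => (hup β h0 t ht).trans (mul_le_mul_of_nonneg_right h1 (by linarith))
  obtain ⟨u1, u2, u3⟩ := hU_sol α hα0.le
  obtain ⟨ui1, ui2⟩ := hU_init α hα0.le
  have hdiff : ∀ β, α < β → β < α + 1 → ∀ t ∈ Icc a b,
      |U β t - U α t| ≤ C * (β - α) ∧ |U' β t - U' α t| ≤ C * (β - α) := by
    intro β hβ1 hβ2 t ht
    obtain ⟨h1, h2, h3⟩ := hU_sol β (hα0.trans hβ1).le
    obtain ⟨i1, i2⟩ := hU_init β (hα0.trans hβ1).le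
    have := hC (fun t => U β t - U α t) (fun t => U' β t - U' α t)
      (fun s => q s * g (U β s) - q s * g (U α s)) (β - α) (by simp [i1, ui1])
      (fun t ht => (h1 t ht).sub (u1 t ht)) (h2.sub u2) (fun t ht => by
        have hs : uIcc a t ⊆ uIcc a b := by
          rw [uIcc_of_le hab.le]; exact uIcc_subset_Icc ⟨le_rfl, hab.le⟩ ht
        rw [intervalIntegral.integral_sub (h2.mono_set hs) (u2.mono_set hs), h3 t ht, u3 t ht, i2, ui2]
        ring) (by
        filter_upwards [hq0] with s hs hst
        rw [← mul_sub, abs_mul, abs_of_nonneg (hs hst), mul_comm L, mul_assoc]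
        exact mul_le_mul_of_nonneg_left (hL _ (hle β (hα0.trans hβ1).le hβ2.le s hst) _
          (hle α hα0.le (by linarith) s hst)) (hs hst)) t ht
    rwa [abs_of_pos (sub_pos.2 hβ1)] at this
  have hev : ∀ᶠ β in 𝓝[>] α, α < β ∧ β < α + 1 := Ioo_mem_nhdsGT (by linarith)
  have hslope : ∀ {f : ℝ → ℝ} {d : ℝ}, HasDerivAt f d α →
      Tendsto (fun β => (f β - f α) / (β - α)) (𝓝[>] α) (𝓝 d) := by
    intro f d hf
    rw [hasDerivAt_iff_tendsto_slope] at hf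
    have := hf.mono_left (nhdsWithin_mono α (fun x (hx : α < x) => ne_of_gt hx))
    refine this.congr fun β => ?_
    rw [slope_def_field]
  -- continuity of DU
  have hvlip : ∀ s ∈ Icc a b, ∀ t ∈ Icc a b, |DU α t - DU α s| ≤ C * |t - s| := by
    intro s hs t ht
    have h1 := (hslope ((hDU α hα0 t ht).sub (hDU α hα0 s hs))).abs
    refine le_of_tendsto h1 ?_
    filter_upwards [hev] with β hβ
    have h2 := Convex.norm_image_sub_le_of_norm_hasDerivWithin_le (f := fun t => U β t - U α t)
      (f' := fun t => U' β t - U' α t) (s := Icc a b)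
      (C := C * (β - α)) (x := s) (y := t)
      (fun x hx => (((hU_sol β (hα0.trans hβ.1).le).1 x hx).sub (u1 x hx)).hasDerivWithinAt)
      (fun x hx => (hdiff β hβ.1 hβ.2 x hx).2)
      (convex_Icc a b) hs ht
    have hp : 0 < β - α := sub_pos.2 hβ.1
    rw [abs_div, abs_of_pos hp, div_le_iff₀ hp]
    rw [Real.norm_eq_abs, Real.norm_eq_abs] at h2
    calc _ = |U β t - U α t - (U β s - U α s)| := by
          simp only [Pi.sub_apply]; congr 1; ring
      _ ≤ _ := h2
      _ = _ := by ring
  have hvc : ContinuousOn (DU α) (Icc a b) := by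
    have : LipschitzOnWith (Real.toNNReal C) (DU α) (Icc a b) := by
      apply LipschitzOnWith.of_dist_le_mul
      intro x hx y hy
      rw [Real.coe_toNNReal C hC0]
      exact hvlip y hy x hx
    exact this.continuousOn
  have hBmem : B ∈ Icc a b := ⟨haB.le, hBb⟩
  have haBsub : Icc a B ⊆ Icc a b := Icc_subset_Icc_right hBb
  have hucont : ContinuousOn (U α) (Icc a b) := fun t ht => (u1 t ht).continuousAt.continuousWithinAt
  have hsetB : uIcc a B ⊆ uIcc a b := by
    rw [uIcc_of_le hab.le, uIcc_of_le haB.le]; exact haBsub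
  -- u'(B) ≤ 0
  have hu'B : U' α B ≤ 0 := by
    have h1 := u1 B hBmem
    rw [hasDerivAt_iff_tendsto_slope] at h1
    have h2 : Tendsto (slope (U α) B) (𝓝[<] B) (𝓝 (U' α B)) :=
      h1.mono_left (nhdsWithin_mono B (fun x (hx : x < B) => ne_of_lt hx))
    refine le_of_tendsto h2 ?_
    filter_upwards [Ioo_mem_nhdsLT haB] with t ht
    rw [slope_def_field, hUB, sub_zero]
    exact div_nonpos_of_nonneg_of_nonpos (hUpos t ht).le (by linarith [ht.2])
  -- the key identity
  have key : U' α B * DU α B =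
      ∫ s in a..B, q s * (U α s * (deriv g (U α s) * DU α s) - g (U α s) * DU α s) := by
    obtain ⟨A, hA⟩ := isCompact_Icc.exists_bound_of_continuousOn hucont
    have hA0 : 0 ≤ A := (norm_nonneg _).trans (hA a ⟨le_rfl, hab.le⟩)
    have hG : ∀ s ∈ Icc a b, |g (U α s)| ≤ L * A := by
      intro s hs
      have := hL (U α s) (hle α hα0.le (by linarith) s hs) 0 (mul_nonneg (by linarith) (by linarith))
      rw [hg0, sub_zero, sub_zero] at this
      exact this.trans (mul_le_mul_of_nonneg_left (hA s hs) hL0)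
    set F : ℝ → ℝ → ℝ := fun β s => q s * (U α s * ((g (U β s) - g (U α s)) / (β - α))
      - g (U α s) * ((U β s - U α s) / (β - α))) with hF
    have hid : ∀ β, α < β → β < α + 1 → IntervalIntegrable (F β) volume a B ∧
        ∫ s in a..B, F β s = U' α B * ((U β B - U α B) / (β - α)) := by
      intro β hβ1 hβ2
      obtain ⟨h1, h2, h3⟩ := hU_sol β (hα0.trans hβ1).le
      obtain ⟨i1, i2⟩ := hU_init β (hα0.trans hβ1).le
      have h2B := h2.mono_set hsetB
      have u2B := u2.mono_set hsetB
      have hW := aux_wronskian (k := α) (l := β) haB.le (fun t ht => u1 t (haBsub ht))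
        (fun t ht => h1 t (haBsub ht)) u2B h2B
        (fun t ht => by rw [u3 t (haBsub ht), ui2]) (fun t ht => by rw [h3 t (haBsub ht), i2])
      have hFe : F β = fun s => (β - α)⁻¹ * (U α s * (q s * g (U β s)) - q s * g (U α s) * U β s) := by
        funext s
        simp only [hF]
        ring
      have hbc : ContinuousOn (U β) (uIcc a B) := by
        rw [uIcc_of_le haB.le]
        exact fun t ht => (h1 t (haBsub ht)).continuousAt.continuousWithinAt
      have huc : ContinuousOn (U α) (uIcc a B) := by
        rw [uIcc_of_le haB.le]
        exact hucont.mono haBsub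
      rw [hFe]
      refine ⟨((h2B.continuousOn_mul huc).sub (u2B.mul_continuousOn hbc)).const_mul _, ?_⟩
      rw [intervalIntegral.integral_const_mul, hW, hUB, i1, ui1]
      ring
    have hT1 : Tendsto (fun β => ∫ s in a..B, F β s) (𝓝[>] α) (𝓝 (U' α B * DU α B)) := by
      refine ((hslope (hDU α hα0 B hBmem)).const_mul (U' α B)).congr' ?_
      filter_upwards [hev] with β hβ
      exact (hid β hβ.1 hβ.2).2.symm
    refine tendsto_nhds_unique hT1 ?_
    apply intervalIntegral.tendsto_integral_filter_of_dominated_convergence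
      (fun s => q s * (A * (L * C) + L * A * C))
    · filter_upwards [hev] with β hβ
      have := (hid β hβ.1 hβ.2).1.aestronglyMeasurable
      rwa [uIoc_of_le haB.le]
    · filter_upwards [hev] with β hβ
      filter_upwards [hq0] with s hs hsm
      rw [uIoc_of_le haB.le] at hsm
      have hsb : s ∈ Icc a b := ⟨hsm.1.le, hsm.2.trans hBb⟩
      have hp : 0 < β - α := sub_pos.2 hβ.1
      simp only [hF]
      rw [Real.norm_eq_abs, abs_mul, abs_of_nonneg (hs hsb)]
      apply mul_le_mul_of_nonneg_left _ (hs hsb)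
      have d1 := (hdiff β hβ.1 hβ.2 s hsb).1
      have d2 := hL (U β s) (hle β (hα0.trans hβ.1).le hβ.2.le s hsb) (U α s)
        (hle α hα0.le (by linarith) s hsb)
      have d3 : |(U β s - U α s) / (β - α)| ≤ C := by
        rw [abs_div, abs_of_pos hp, div_le_iff₀ hp]; exact d1
      have d4 : |(g (U β s) - g (U α s)) / (β - α)| ≤ L * C := by
        rw [abs_div, abs_of_pos hp, div_le_iff₀ hp]
        refine d2.trans ?_
        rw [mul_assoc]
        exact mul_le_mul_of_nonneg_left d1 hL0
      refine (abs_sub _ _).trans ?_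
      rw [abs_mul, abs_mul]
      exact add_le_add (mul_le_mul (hA s hsb) d4 (abs_nonneg _) hA0)
        (mul_le_mul (hG s hsb) d3 (abs_nonneg _) (mul_nonneg hL0 hA0))
    · exact (hqi.mono_set hsetB).mul_const _
    · have hneB : ∀ᵐ x : ℝ, x ≠ B := by simp [ae_iff, measure_singleton]
      filter_upwards [hneB] with s hsB hsm
      rw [uIoc_of_le haB.le] at hsm
      have hsb : s ∈ Icc a b := ⟨hsm.1.le, hsm.2.trans hBb⟩
      have hup := hUpos s ⟨hsm.1, lt_of_le_of_ne hsm.2 hsB⟩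
      have hgd : HasDerivAt g (deriv g (U α s)) (U α s) :=
        ((hg_C1.differentiableOn (by decide)).differentiableAt (Ici_mem_nhds hup)).hasDerivAt
      have c1 := hDU α hα0 s hsb
      have c2 : HasDerivAt (fun β => g (U β s)) (deriv g (U α s) * DU α s) α :=
        HasDerivAt.comp (h := fun β => U β s) α hgd c1
      exact (((hslope c2).const_mul _).sub ((hslope c1).const_mul _)).const_mul _
  -- positivity contradiction
  have hq_not : ¬ ∀ᵐ s, s ∈ Ioo a B → q s = 0 := by
    intro hz
    have hd : ∀ t ∈ Icc a B, U' α t = α := by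
      intro t ht
      rw [u3 t (haBsub ht), ui2]
      have hneB : ∀ᵐ x : ℝ, x ≠ B := by simp [ae_iff, measure_singleton]
      have : ∫ s in a..t, q s * g (U α s) = ∫ s in a..t, (0:ℝ) := by
        apply intervalIntegral.integral_congr_ae
        filter_upwards [hz, hneB] with s hs hsB hsm
        rw [uIoc_of_le ht.1] at hsm
        rw [hs ⟨hsm.1, lt_of_le_of_ne (hsm.2.trans ht.2) hsB⟩, zero_mul]
      rw [this]
      simp
    obtain ⟨c, hc, hce⟩ := exists_hasDerivAt_eq_slope (U α) (U' α) haB (hucont.mono haBsub)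
      (fun x hx => u1 x (haBsub (Ioo_subset_Icc_self hx)))
    rw [hd c (Ioo_subset_Icc_self hc), hUB, ui1] at hce
    simp at hce
    exact hα0.ne' hce
  have hint0 : IntervalIntegrable (fun s => q s * (U α s * (deriv g (U α s) * DU α s) - g (U α s) * DU α s)) volume a B → 
      ∀ σ : ℝ, (∀ t ∈ Ioo a B, 0 < σ * DU α t) → False := by
    intro hI σ hσ
    have hσB : 0 ≤ σ * DU α B := by
      have h1 : ContinuousWithinAt (DU α) (Ioo a B) B :=
        (hvc B hBmem).mono (Ioo_subset_Icc_self.trans haBsub)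
      have h2 : Tendsto (fun t => σ * DU α t) (𝓝[Ioo a B] B) (𝓝 (σ * DU α B)) := h1.const_mul σ
      have : (𝓝[Ioo a B] B).NeBot := by
        rw [nhdsWithin_Ioo_eq_nhdsLT haB]; infer_instance
      refine ge_of_tendsto h2 ?_
      filter_upwards [self_mem_nhdsWithin] with t ht using (hσ t ht).le
    have hfac : ∀ t ∈ Ioo a B, 0 < σ * (U α t * (deriv g (U α t) * DU α t) - g (U α t) * DU α t) := by
      intro t ht
      have h1 := hg_s (U α t) (hUpos t ht)
      rw [div_lt_iff₀ (hUpos t ht)] at h1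
      have := mul_pos (sub_pos.2 h1) (hσ t ht)
      linarith
    have hneB : ∀ᵐ x : ℝ, x ≠ B := by simp [ae_iff, measure_singleton]
    set f : ℝ → ℝ := fun s => σ * (q s * (U α s * (deriv g (U α s) * DU α s) - g (U α s) * DU α s)) with hf
    have hfI : IntervalIntegrable f volume a B := hI.const_mul σ
    have hfnn : 0 ≤ᵐ[volume.restrict (Ioc a B)] f := by
      rw [EventuallyLE, ae_restrict_iff' measurableSet_Ioc]
      filter_upwards [hneB, hq0] with s hsB hqs hsm
      have h1 := hfac s ⟨hsm.1, lt_of_le_of_ne hsm.2 hsB⟩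
      have h2 := mul_nonneg (hqs ⟨hsm.1.le, hsm.2.trans hBb⟩) h1.le
      simp only [hf, Pi.zero_apply]
      linarith
    have hfint : ∫ s in a..B, f s = U' α B * (σ * DU α B) := by
      simp only [hf]
      rw [intervalIntegral.integral_const_mul, ← key]; ring
    have hf0 : ∫ s in a..B, f s = 0 := by
      apply le_antisymm
      · rw [hfint]; exact mul_nonpos_of_nonpos_of_nonneg hu'B hσB
      · exact intervalIntegral.integral_nonneg_of_ae_restrict haB.le (by
          rwa [Measure.restrict_congr_set Ioc_ae_eq_Icc.symm])
    rw [intervalIntegral.integral_eq_zero_iff_of_le_of_nonneg_ae haB.le hfnn hfI] at hf0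
    rw [EventuallyEq, ae_restrict_iff' measurableSet_Ioc] at hf0
    apply hq_not
    filter_upwards [hf0] with s hs hsm
    have h1 := hs ⟨hsm.1, hsm.2.le⟩
    have h2 := hfac s hsm
    simp only [hf, Pi.zero_apply] at h1
    have h3 : q s * (σ * (U α s * (deriv g (U α s) * DU α s) - g (U α s) * DU α s)) = 0 := by
      linarith
    rcases mul_eq_zero.1 h3 with h | h
    · exact h
    · exact absurd h h2.ne'
  have hI : IntervalIntegrable (fun s => q s * (U α s * (deriv g (U α s) * DU α s)
      - g (U α s) * DU α s)) volume a B := by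
    have hmaps : MapsTo (U α) (Icc a B) (Ici 0) := by
      intro t ht
      rcases eq_or_lt_of_le ht.1 with h | h
      · rw [← h]; exact ui1.ge
      · rcases eq_or_lt_of_le ht.2 with h' | h'
        · rw [h']; exact hUB.ge
        · exact (hUpos t ⟨h, h'⟩).le
    have hdc : ContinuousOn (derivWithin g (Ici 0)) (Ici 0) :=
      hg_C1.continuousOn_derivWithin (uniqueDiffOn_Ici 0) le_rfl
    have hu : ContinuousOn (U α) (Icc a B) := hucont.mono haBsub
    have hv : ContinuousOn (DU α) (Icc a B) := hvc.mono haBsub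
    have hc := (hu.mul ((hdc.comp hu hmaps).mul hv)).sub ((hg_C1.continuousOn.comp hu hmaps).mul hv)
    rw [← uIcc_of_le haB.le] at hc
    have h1 := (hqi.mono_set hsetB).mul_continuousOn hc
    refine h1.congr_ae ?_
    rw [uIoc_of_le haB.le, EventuallyEq, ae_restrict_iff' measurableSet_Ioc]
    have hneB : ∀ᵐ x : ℝ, x ≠ B := by simp [ae_iff, measure_singleton]
    filter_upwards [hneB] with s hsB hsm
    have hp := hUpos s ⟨hsm.1, lt_of_le_of_ne hsm.2 hsB⟩
    simp only [Function.comp, Pi.mul_apply, Pi.sub_apply]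
    rw [derivWithin_of_mem_nhds (Ici_mem_nhds hp)]
  by_contra hno
  push Not at hno
  have hvIoo : ContinuousOn (DU α) (Ioo a B) := hvc.mono (Ioo_subset_Icc_self.trans haBsub)
  obtain ⟨m, hm⟩ := nonempty_Ioo.2 haB
  have hsame : ∀ t ∈ Ioo a B, 0 < DU α m * DU α t := by
    intro t ht
    by_contra hle
    have hle := not_lt.1 hle
    have hc : ContinuousOn (fun t => DU α m * DU α t) (Ioo a B) := continuousOn_const.mul hvIoo
    have hmm : 0 ≤ DU α m * DU α m := mul_self_nonneg _
    obtain ⟨z, hz, hz0⟩ := isPreconnected_Ioo.intermediate_value ht hm hc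
      (show (0:ℝ) ∈ Icc (DU α m * DU α t) (DU α m * DU α m) from ⟨hle, hmm⟩)
    rcases mul_eq_zero.1 hz0 with h | h
    · exact hno m hm h
    · exact hno z hz h
  exact hint0 hI (DU α m) hsame
end

section
/- (Sturm comparison theorem with L¹ coefficients.) Let ω₁, ω₂ ∈ L¹([c,d]) with ω₁(t) ≤ ω₂(t) a.e. on [c,d] and ω₁ < ω₂ on a set of positive Lebesgue measure. Let u₁ and u₂ be nontrivial Carathéodory solutions of u_i'' + ω_i(t) u_i = 0 on (c,d), i = 1,2. Assume that either (i) u₁(c) = 0 = u₁(d), or (ii) u₁'(c) = 0 = u₁(d) and u₂'(c) = 0. Then u₂ vanishes at some point of the open interval (c,d). -/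
open Set MeasureTheory Filter Topology

/-- Carathéodory solution of the linear equation `u'' + ω(t) u = 0` on `[c,d]`:
`u'` is the derivative of `u`, it is absolutely continuous, and the equation
holds a.e. (equivalently, `u'` is the indefinite integral of `-ω u`). -/
def IsLinCaraSol (c d : ℝ) (ω : ℝ → ℝ) (u u' : ℝ → ℝ) : Prop :=
  (∀ t ∈ Set.Icc c d, HasDerivAt u (u' t) t) ∧
  IntervalIntegrable (fun s => ω s * u s) MeasureTheory.volume c d ∧
  ∀ t ∈ Set.Icc c d, u' t = u' c - ∫ s in c..t, ω s * u s

lemma aux_ac {f f' : ℝ → ℝ} {a b : ℝ} (hab : a ≤ b)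
    (hf : ∀ t ∈ Icc a b, HasDerivAt f (f' t) t) (hf' : ContinuousOn f' (Icc a b)) :
    AbsolutelyContinuousOnInterval f a b := by
  obtain ⟨C, hC⟩ := isCompact_Icc.exists_bound_of_continuousOn hf'
  have : LipschitzOnWith C.toNNReal f (uIcc a b) := by
    rw [uIcc_of_le hab]
    refine (convex_Icc a b).lipschitzOnWith_of_nnnorm_hasDerivWithin_le
      (fun t ht => (hf t ht).hasDerivWithinAt) (fun t ht => ?_)
    rw [← NNReal.coe_le_coe]
    simpa using Or.inl (hC t ht)
  exact this.absolutelyContinuousOnInterval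

lemma aux_contOn {c d : ℝ} (hcd : c ≤ d) {ω u u' : ℝ → ℝ} (h : IsLinCaraSol c d ω u u') :
    AbsolutelyContinuousOnInterval u' c d := by
  have h1 := h.2.1.absolutelyContinuousOnInterval_intervalIntegral (c := c) (by simp)
  rw [absolutelyContinuousOnInterval_iff] at h1 ⊢
  intro ε hε
  obtain ⟨δ, hδ, H⟩ := h1 ε hε
  refine ⟨δ, hδ, fun E hE hs => ?_⟩
  refine lt_of_eq_of_lt (Finset.sum_congr rfl fun i hi => ?_) (H E hE hs)
  have := hE.1 i hi
  rw [uIcc_of_le hcd] at this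
  rw [h.2.2 _ this.1, h.2.2 _ this.2, dist_sub_left]

lemma aux_deriv {c d : ℝ} (hcd : c ≤ d) {ω u u' : ℝ → ℝ} (h : IsLinCaraSol c d ω u u') :
    ∀ᵐ t, t ∈ Ioo c d → HasDerivAt u' (-(ω t * u t)) t := by
  filter_upwards [h.2.1.ae_hasDerivAt_integral] with t ht htm
  have h1 := ht (by rw [uIcc_of_le hcd]; exact Ioo_subset_Icc_self htm) c (by simp)
  have h2 := h1.const_sub (u' c)
  refine h2.congr_of_eventuallyEq ?_
  filter_upwards [Ioo_mem_nhds htm.1 htm.2] with s hs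
  exact h.2.2 s (Ioo_subset_Icc_self hs)

lemma aux_uniq {c d : ℝ} (hcd : c < d) {ω u u' : ℝ → ℝ} (h : IsLinCaraSol c d ω u u')
    (hω : IntegrableOn ω (Icc c d)) {p : ℝ} (hp : p ∈ Icc c d) (h0 : u p = 0) (h0' : u' p = 0) :
    ∃ t ∈ Ioo c d, u t = 0 := by
  set A := ∫ t in Icc c d, |ω t| with hA
  have hA0 : 0 ≤ A := integral_nonneg fun _ => abs_nonneg _
  set δ := 1 / (2 * (A + 1)) with hδ
  have hδ0 : 0 < δ := by positivity
  have hδA : δ * A ≤ 1 / 2 := by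
    rw [hδ, div_mul_eq_mul_div, div_le_div_iff₀ (by positivity) (by positivity)]; linarith
  set a := max c (p - δ) with ha
  set b := min d (p + δ) with hb
  have hab : a < b := by
    simp only [ha, hb, max_lt_iff, lt_min_iff]
    refine ⟨⟨hcd, ?_⟩, ?_, ?_⟩ <;> linarith [hp.1, hp.2]
  have hpJ : p ∈ Icc a b := by
    simp only [ha, hb, mem_Icc, max_le_iff, le_min_iff]
    refine ⟨⟨hp.1, ?_⟩, hp.2, ?_⟩ <;> linarith
  have hJ : Icc a b ⊆ Icc c d := Icc_subset_Icc (le_max_left _ _) (min_le_left _ _)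
  have hdist : ∀ t ∈ Icc a b, |t - p| ≤ δ := by
    intro t ht
    have h1 := le_trans (le_max_right c (p - δ)) ht.1
    have h2 := le_trans ht.2 (min_le_right d (p + δ))
    rw [abs_le]; constructor <;> linarith
  have hcont : ContinuousOn u' (Icc c d) := by
    have := (aux_contOn hcd.le h).continuousOn
    rwa [uIcc_of_le hcd.le] at this
  obtain ⟨t0, ht0, hmax⟩ := isCompact_Icc.exists_isMaxOn ⟨p, hpJ⟩ (hcont.mono hJ).abs
  set M := |u' t0| with hM
  have hM' : ∀ t ∈ Icc a b, |u' t| ≤ M := fun t ht => hmax ht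
  have hu : ∀ t ∈ Icc a b, |u t| ≤ M * δ := by
    intro t ht
    have := (convex_Icc a b).norm_image_sub_le_of_norm_hasDerivWithin_le
      (fun s hs => (h.1 s (hJ hs)).hasDerivWithinAt) (C := M) (fun s hs => hM' s hs) hpJ ht
    rw [h0, sub_zero] at this
    exact this.trans (mul_le_mul_of_nonneg_left (hdist t ht) (abs_nonneg _))
  have hii : ∀ s ∈ Icc c d, IntervalIntegrable (fun s => ω s * u s) volume c s := fun s hs =>
    h.2.1.mono_set (by rw [uIcc_of_le hs.1, uIcc_of_le hcd.le]; exact Icc_subset_Icc le_rfl hs.2)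
  have hval : u' t0 = - ∫ s in p..t0, ω s * u s := by
    have e1 := h.2.2 t0 (hJ ht0)
    have e2 := h.2.2 p hp
    rw [← intervalIntegral.integral_interval_sub_left (hii _ (hJ ht0)) (hii _ hp)]
    linarith
  have hsub : uIoc p t0 ⊆ Icc a b := uIoc_subset_uIcc.trans (uIcc_subset_Icc hpJ ht0)
  have hMle : M ≤ A * (M * δ) := by
    calc M = ‖∫ s in p..t0, ω s * u s‖ := by rw [hM, hval, abs_neg, Real.norm_eq_abs]
      _ ≤ ∫ s in uIoc p t0, ‖ω s * u s‖ := intervalIntegral.norm_integral_le_integral_norm_uIoc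
      _ ≤ ∫ s in uIoc p t0, |ω s| * (M * δ) := by
        apply setIntegral_mono_on
        · have : IntegrableOn (fun s => ω s * u s) (Icc c d) := by
            have := h.2.1
            rwa [intervalIntegrable_iff_integrableOn_Icc_of_le hcd.le] at this
          exact (this.mono_set (hsub.trans hJ)).norm
        · exact ((hω.mono_set (hsub.trans hJ)).norm).mul_const _
        · exact measurableSet_uIoc
        · intro s hs
          rw [Real.norm_eq_abs, abs_mul]
          exact mul_le_mul_of_nonneg_left (hu s (hsub hs)) (abs_nonneg _)
      _ = (∫ s in uIoc p t0, |ω s|) * (M * δ) := integral_mul_const _ _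
      _ ≤ A * (M * δ) := by
        refine mul_le_mul_of_nonneg_right ?_ (mul_nonneg (abs_nonneg _) hδ0.le)
        exact setIntegral_mono_set hω.norm (Eventually.of_forall fun _ => abs_nonneg _)
          (Eventually.of_forall (hsub.trans hJ))
  have hM0 : M ≤ 0 := by
    have : 0 ≤ M := abs_nonneg _
    nlinarith
  refine ⟨(a + b) / 2, ⟨?_, ?_⟩, ?_⟩
  · have : c ≤ a := le_max_left _ _
    linarith
  · have : b ≤ d := min_le_left _ _
    linarith
  · have := hu ((a + b) / 2) ⟨by linarith, by linarith⟩
    have h2 : M * δ ≤ 0 := mul_nonpos_of_nonpos_of_nonneg hM0 hδ0.le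
    exact abs_nonpos_iff.1 (this.trans h2)

lemma aux_lim {c d p : ℝ} (hp : p ∉ Ioo c d) {u₁ u₁' u₂ u₂' : ℝ → ℝ}
    (h₁ : HasDerivAt u₁ (u₁' p) p) (h₂ : HasDerivAt u₂ (u₂' p) p)
    (c₁ : ContinuousWithinAt u₁' (Ioo c d) p) (c₂ : ContinuousWithinAt u₂' (Ioo c d) p)
    (hne : ∀ t ∈ Ioo c d, u₂ t ≠ 0)
    (h0 : u₁ p = 0 ∨ (u₁' p = 0 ∧ u₂' p = 0)) (hn : u₂ p ≠ 0 ∨ (u₁ p = 0 ∧ u₂' p ≠ 0)) :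
    Tendsto (fun t => u₁ t / u₂ t * (u₁' t * u₂ t - u₁ t * u₂' t)) (𝓝[Ioo c d] p) (𝓝 0) := by
  have t1 : Tendsto u₁ (𝓝[Ioo c d] p) (𝓝 (u₁ p)) := h₁.continuousAt.continuousWithinAt
  have t2 : Tendsto u₂ (𝓝[Ioo c d] p) (𝓝 (u₂ p)) := h₂.continuousAt.continuousWithinAt
  by_cases hz : u₂ p = 0
  · obtain ⟨hu, hu'⟩ := hn.resolve_left (by simpa using hz)
    have hsub : 𝓝[Ioo c d] p ≤ 𝓝[≠] p := nhdsWithin_mono _ (fun t ht hh => hp (hh ▸ ht))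
    have s1 := (hasDerivAt_iff_tendsto_slope.1 h₁).mono_left hsub
    have s2 := (hasDerivAt_iff_tendsto_slope.1 h₂).mono_left hsub
    have hq : Tendsto (fun t => u₁ t / u₂ t) (𝓝[Ioo c d] p) (𝓝 (u₁' p / u₂' p)) := by
      refine (s1.div s2 hu').congr' ?_
      filter_upwards [self_mem_nhdsWithin] with t ht
      have : t - p ≠ 0 := sub_ne_zero.2 (fun hh => hp (hh ▸ ht))
      have := hne t ht
      simp only [Pi.div_apply, slope_def_field, hu, hz, sub_zero]
      field_simp
    have := hq.mul ((c₁.tendsto.mul t2).sub (t1.mul c₂.tendsto))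
    simpa [hu, hz] using this
  · have := (t1.div t2 hz).mul ((c₁.tendsto.mul t2).sub (t1.mul c₂.tendsto))
    rcases h0 with h | ⟨h, h'⟩
    · simpa [h] using this
    · simpa [h, h'] using this

/-- **Sturm comparison theorem with `L¹` coefficients.**
If `ω₁ ≤ ω₂` a.e. on `[c,d]` with strict inequality on a set of positive measure,
`u₁, u₂` are nontrivial solutions of `uᵢ'' + ωᵢ uᵢ = 0`, and either
`u₁(c) = 0 = u₁(d)`, or `u₁'(c) = 0 = u₁(d)` and `u₂'(c) = 0`, then `u₂` vanishes
somewhere in `(c,d)`. -/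
theorem sturm_comparison
    (c d : ℝ) (hcd : c < d)
    (ω₁ ω₂ : ℝ → ℝ)
    (hω₁ : IntegrableOn ω₁ (Set.Icc c d))
    (hω₂ : IntegrableOn ω₂ (Set.Icc c d))
    (hle : ∀ᵐ t ∂(volume.restrict (Set.Icc c d)), ω₁ t ≤ ω₂ t)
    (hlt : 0 < volume {t ∈ Set.Icc c d | ω₁ t < ω₂ t})
    (u₁ u₁' u₂ u₂' : ℝ → ℝ)
    (hsol₁ : IsLinCaraSol c d ω₁ u₁ u₁')
    (hsol₂ : IsLinCaraSol c d ω₂ u₂ u₂')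
    (hnt₁ : ∃ t ∈ Set.Icc c d, u₁ t ≠ 0)
    (hnt₂ : ∃ t ∈ Set.Icc c d, u₂ t ≠ 0)
    (hbc : (u₁ c = 0 ∧ u₁ d = 0) ∨ (u₁' c = 0 ∧ u₁ d = 0 ∧ u₂' c = 0)) :
    ∃ t ∈ Set.Ioo c d, u₂ t = 0 := by
  by_contra hcon
  push Not at hcon
  have hneI : ∀ t ∈ Ioo c d, u₂ t ≠ 0 := hcon
  have uq : ∀ p ∈ Icc c d, u₂ p = 0 → u₂' p ≠ 0 := by
    intro p hp h0 h0'
    obtain ⟨t, ht, h⟩ := aux_uniq hcd hsol₂ hω₂ hp h0 h0'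
    exact hcon t ht h
  have ac₁ := aux_contOn hcd.le hsol₁
  have ac₂ := aux_contOn hcd.le hsol₂
  have c₁ : ContinuousOn u₁' (Icc c d) := by
    have := ac₁.continuousOn
    rwa [uIcc_of_le hcd.le] at this
  have c₂ : ContinuousOn u₂' (Icc c d) := by
    have := ac₂.continuousOn
    rwa [uIcc_of_le hcd.le] at this
  have cu₁ : ContinuousOn u₁ (Icc c d) := fun t ht =>
    (hsol₁.1 t ht).continuousAt.continuousWithinAt
  have cu₂ : ContinuousOn u₂ (Icc c d) := fun t ht =>
    (hsol₂.1 t ht).continuousAt.continuousWithinAt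
  have hcm : c ∈ Icc c d := left_mem_Icc.2 hcd.le
  have hdm : d ∈ Icc c d := right_mem_Icc.2 hcd.le
  set F : ℝ → ℝ := fun t => u₁ t / u₂ t * (u₁' t * u₂ t - u₁ t * u₂' t) with hF
  have hud : u₁ d = 0 := by rcases hbc with h | h; exacts [h.2, h.2.1]
  have limc : Tendsto F (𝓝[Ioo c d] c) (𝓝 0) := by
    refine aux_lim (by simp) (hsol₁.1 c hcm) (hsol₂.1 c hcm)
      ((c₁ c hcm).mono Ioo_subset_Icc_self) ((c₂ c hcm).mono Ioo_subset_Icc_self) hneI ?_ ?_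
    · rcases hbc with h | h
      exacts [Or.inl h.1, Or.inr ⟨h.1, h.2.2⟩]
    · by_cases hz : u₂ c = 0
      · rcases hbc with h | h
        · exact Or.inr ⟨h.1, uq c hcm hz⟩
        · exact absurd h.2.2 (uq c hcm hz)
      · exact Or.inl hz
  have limd : Tendsto F (𝓝[Ioo c d] d) (𝓝 0) := by
    refine aux_lim (by simp) (hsol₁.1 d hdm) (hsol₂.1 d hdm)
      ((c₁ d hdm).mono Ioo_subset_Icc_self) ((c₂ d hdm).mono Ioo_subset_Icc_self) hneI
      (Or.inl hud) ?_
    by_cases hz : u₂ d = 0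
    · exact Or.inr ⟨hud, uq d hdm hz⟩
    · exact Or.inl hz
  -- derivative of the quotient
  have hg : ∀ t ∈ Ioo c d, HasDerivAt (fun s => u₁ s / u₂ s)
      ((u₁' t * u₂ t - u₁ t * u₂' t) / u₂ t ^ 2) t := fun t ht =>
    (hsol₁.1 t (Ioo_subset_Icc_self ht)).div (hsol₂.1 t (Ioo_subset_Icc_self ht)) (hneI t ht)
  have hle' : ∀ᵐ t, t ∈ Icc c d → ω₁ t ≤ ω₂ t := (ae_restrict_iff' measurableSet_Icc).1 hle
  have hFd : ∀ᵐ t, t ∈ Ioo c d → HasDerivAt F ((ω₂ t - ω₁ t) * u₁ t ^ 2 +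
      ((u₁' t * u₂ t - u₁ t * u₂' t) / u₂ t) ^ 2) t := by
    filter_upwards [aux_deriv hcd.le hsol₁, aux_deriv hcd.le hsol₂] with t h1 h2 ht
    have hW := ((h1 ht).mul (hsol₂.1 t (Ioo_subset_Icc_self ht))).sub
      ((hsol₁.1 t (Ioo_subset_Icc_self ht)).mul (h2 ht))
    have := (hg t ht).mul hW
    refine this.congr_deriv ?_
    have := hneI t ht
    simp only [Pi.sub_apply, Pi.mul_apply]
    field_simp
    ring
  have mono : ∀ a b, c < a → a ≤ b → b < d → F a ≤ F b := by
    intro a b hca hab hbd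
    have hs : Icc a b ⊆ Ioo c d := Icc_subset_Ioo hca hbd
    have hs' : Icc a b ⊆ Icc c d := hs.trans Ioo_subset_Icc_self
    have hsu : uIcc a b ⊆ uIcc c d := by rwa [uIcc_of_le hab, uIcc_of_le hcd.le]
    have cW : ContinuousOn (fun t => u₁' t * u₂ t - u₁ t * u₂' t) (Icc a b) :=
      ((c₁.mono hs').mul (cu₂.mono hs')).sub ((cu₁.mono hs').mul (c₂.mono hs'))
    have A1 : AbsolutelyContinuousOnInterval (fun s => u₁ s / u₂ s) a b :=
      aux_ac hab (fun t ht => hg t (hs ht))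
        (cW.div ((cu₂.mono hs').pow 2) fun t ht => pow_ne_zero 2 (hneI t (hs ht)))
    have B1 := aux_ac hab (fun t ht => hsol₁.1 t (hs' ht)) (c₁.mono hs')
    have B2 := aux_ac hab (fun t ht => hsol₂.1 t (hs' ht)) (c₂.mono hs')
    have A2 : AbsolutelyContinuousOnInterval F a b :=
      A1.fun_mul (((ac₁.mono hsu).fun_mul B2).fun_sub (B1.fun_mul (ac₂.mono hsu)))
    have I := A2.integral_deriv_eq_sub
    have : 0 ≤ ∫ x in a..b, deriv F x := by
      apply intervalIntegral.integral_nonneg_of_ae_restrict hab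
      refine (ae_restrict_iff' measurableSet_Icc).2 ?_
      filter_upwards [hFd, hle'] with t h1 h2 ht
      rw [(h1 (hs ht)).deriv]
      have := h2 (hs' ht)
      have : 0 ≤ ω₂ t - ω₁ t := by linarith
      simp only [Pi.zero_apply]
      positivity
    linarith
  have nbc : (𝓝[Ioo c d] c).NeBot := left_nhdsWithin_Ioo_neBot hcd
  have nbd : (𝓝[Ioo c d] d).NeBot := right_nhdsWithin_Ioo_neBot hcd
  have F0 : ∀ t ∈ Ioo c d, F t = 0 := by
    intro t ht
    apply le_antisymm
    · refine ge_of_tendsto limd ?_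
      filter_upwards [self_mem_nhdsWithin, mem_nhdsWithin_of_mem_nhds (Ioi_mem_nhds ht.2)]
        with s hs hs'
      exact mono t s ht.1 (le_of_lt hs') hs.2
    · refine le_of_tendsto limc ?_
      filter_upwards [self_mem_nhdsWithin, mem_nhdsWithin_of_mem_nhds (Iio_mem_nhds ht.1)]
        with s hs hs'
      exact mono s t hs.1 (le_of_lt hs') ht.2
  have hsq : ∀ t ∈ Ioo c d, HasDerivAt (fun s => (u₁ s / u₂ s) ^ 2) 0 t := by
    intro t ht
    refine ((hg t ht).pow 2).congr_deriv ?_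
    have h0 := F0 t ht
    simp only [hF] at h0
    have h3 : u₁ t / u₂ t * ((u₁' t * u₂ t - u₁ t * u₂' t) / u₂ t ^ 2) = 0 := by
      rw [← mul_div_assoc, h0, zero_div]
    push_cast
    linear_combination 2 * h3
  have hconst : ∀ s ∈ Ioo c d, ∀ t ∈ Ioo c d, (u₁ s / u₂ s) ^ 2 = (u₁ t / u₂ t) ^ 2 := by
    intro s hs t ht
    have := (convex_Ioo c d).norm_image_sub_le_of_norm_hasDerivWithin_le
      (fun x hx => (hsq x hx).hasDerivWithinAt) (C := 0) (fun x hx => by simp) ht hs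
    rw [zero_mul] at this
    exact sub_eq_zero.1 (norm_le_zero_iff.1 this)
  have hex : ∃ s ∈ Ioo c d, u₁ s ≠ 0 := by
    by_contra hall
    push Not at hall
    obtain ⟨t, ht, hne⟩ := hnt₁
    apply hne
    have hcl : EqOn u₁ (fun _ => 0) (Icc c d) := by
      have h1 : EqOn u₁ (fun _ => 0) (Ioo c d) := hall
      exact h1.of_subset_closure cu₁ continuousOn_const Ioo_subset_Icc_self
        (closure_Ioo hcd.ne).ge
    exact hcl ht
  obtain ⟨s, hs, hs0⟩ := hex
  have hne1 : ∀ t ∈ Ioo c d, u₁ t ≠ 0 := by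
    intro t ht h0
    have := hconst s hs t ht
    rw [h0, zero_div, zero_pow two_ne_zero] at this
    exact (pow_ne_zero 2 (div_ne_zero hs0 (hneI s hs))) this
  refine hlt.ne' ?_
  have hae : ∀ᵐ t, ¬ (t ∈ Icc c d ∧ ω₁ t < ω₂ t) := by
    have e1 : ∀ᵐ t : ℝ, t ≠ c := by simp [ae_iff, measure_singleton]
    have e2 : ∀ᵐ t : ℝ, t ≠ d := by simp [ae_iff, measure_singleton]
    filter_upwards [hFd, e1, e2] with t h1 hc hd hh
    have ht : t ∈ Ioo c d := ⟨lt_of_le_of_ne hh.1.1 hc.symm, lt_of_le_of_ne hh.1.2 hd⟩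
    have h2 : HasDerivAt F 0 t := by
      refine (hasDerivAt_const t (0 : ℝ)).congr_of_eventuallyEq ?_
      filter_upwards [Ioo_mem_nhds ht.1 ht.2] with r hr
      exact F0 r hr
    have h3 := (h1 ht).unique h2
    have h4 : 0 < (ω₂ t - ω₁ t) * u₁ t ^ 2 :=
      mul_pos (sub_pos.2 hh.2) (by have := hne1 t ht; positivity)
    have h5 := sq_nonneg ((u₁' t * u₂ t - u₁ t * u₂' t) / u₂ t)
    linarith
  simpa [ae_iff, and_assoc] using hae
end

section
/- (Symmetry of positive solutions.) Let a<b, c := (a+b)/2, let g ∈ C¹([0,∞),[0,∞)) satisfy (g₊), and let q ∈ L¹([a,b]) be such that q ≥ 0 a.e., q ≢ 0, q(t) = q(a+b−t) for a.e. t ∈ [a,b], and q is non-decreasing on [a,c]. Then every positive solution u of the Dirichlet problem u'' + q(t) g(u) = 0, u(a) = 0 = u(b), is symmetric, i.e. u(t) = u(a+b−t) for every t ∈ [a,b], and is non-decreasing on [a,c]. -/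
open Set MeasureTheory Filter Topology

lemma my_gron {α β K : ℝ} {φ : ℝ → ℝ} (hαβ : α ≤ β) (hc : ContinuousOn φ (Icc α β))
    (h0 : ∀ t ∈ Icc α β, 0 ≤ φ t) (h : ∀ t ∈ Icc α β, φ t ≤ K * ∫ x in α..t, φ x) :
    ∀ t ∈ Icc α β, φ t = 0 := by
  set ψ : ℝ → ℝ := IccExtend hαβ ((Icc α β).domRestrict φ) with hψ
  have hψc : Continuous ψ := (continuousOn_iff_continuous_domRestrict.1 hc).Icc_extend'
  have hψe : ∀ t ∈ Icc α β, ψ t = φ t := fun t ht => by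
    simp [hψ, IccExtend_of_mem hαβ _ ht]
  have hint : ∀ t ∈ Icc α β, ∫ x in α..t, ψ x = ∫ x in α..t, φ x := by
    intro t ht
    apply intervalIntegral.integral_congr
    intro x hx
    rw [uIcc_of_le ht.1] at hx
    exact hψe x ⟨hx.1, hx.2.trans ht.2⟩
  have hd : ∀ t, HasDerivAt (fun t => ∫ x in α..t, ψ x) (ψ t) t := fun t =>
    intervalIntegral.integral_hasDerivAt_right (hψc.intervalIntegrable _ _)
      (hψc.stronglyMeasurableAtFilter _ _) hψc.continuousAt
  have key := norm_le_gronwallBound_of_norm_deriv_right_le (f := fun t => ∫ x in α..t, ψ x)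
    (f' := ψ) (δ := 0) (K := K) (ε := 0) (a := α) (b := β)
    (fun t _ => (hd t).continuousAt.continuousWithinAt) (fun t _ => (hd t).hasDerivWithinAt)
    (by simp) (by
      intro t ht
      have ht' : t ∈ Icc α β := ⟨ht.1, ht.2.le⟩
      have hp : 0 ≤ ∫ x in α..t, ψ x := by
        apply intervalIntegral.integral_nonneg ht.1
        intro x hx
        have hx' : x ∈ Icc α β := ⟨hx.1, hx.2.trans ht'.2⟩
        rw [hψe x hx']; exact h0 x hx'
      rw [Real.norm_of_nonneg hp, hψe t ht', Real.norm_of_nonneg (h0 t ht'), hint t ht', add_zero]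
      exact h t ht')
  intro t ht
  have k := key t ht
  rw [gronwallBound_ε0_δ0] at k
  have k2 : ∫ x in α..t, ψ x = 0 := norm_le_zero_iff.1 k
  have k3 := h t ht
  rw [← hint t ht, k2, mul_zero] at k3
  exact le_antisymm k3 (h0 t ht)

lemma my_uniq {α β C : ℝ} {w w1 : ℝ → ℝ} (hC : 0 ≤ C) (hαβ : α ≤ β)
    (hw : ∀ t ∈ Icc α β, HasDerivAt w (w1 t) t) (hc : ContinuousOn w1 (Icc α β))
    (h : ∀ t ∈ Icc α β, |w1 t| ≤ C * ∫ x in α..t, |w x|) (hw0 : w α = 0) :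
    ∀ t ∈ Icc α β, w t = 0 ∧ w1 t = 0 := by
  have hwc : ContinuousOn w (Icc α β) := fun t ht => (hw t ht).continuousAt.continuousWithinAt
  have key := my_gron (K := C + 1) (φ := fun t => |w t| + |w1 t|) hαβ (hwc.abs.add hc.abs)
    (fun t _ => by positivity) (by
      intro t ht
      have hsub : Icc α t ⊆ Icc α β := Icc_subset_Icc_right ht.2
      have i1 : IntervalIntegrable w1 volume α t :=
        (hc.mono (by rw [uIcc_of_le ht.1]; exact hsub)).intervalIntegrable
      have i2 : IntervalIntegrable w volume α t :=
        (hwc.mono (by rw [uIcc_of_le ht.1]; exact hsub)).intervalIntegrable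
      have e : ∫ x in α..t, w1 x = w t - w α :=
        intervalIntegral.integral_eq_sub_of_hasDerivAt
          (fun x hx => hw x (hsub (by rwa [uIcc_of_le ht.1] at hx))) i1
      have e2 : |w t| ≤ ∫ x in α..t, |w1 x| := by
        rw [hw0, sub_zero] at e
        rw [← e]; exact intervalIntegral.abs_integral_le_integral_abs ht.1
      have p1 : 0 ≤ ∫ x in α..t, |w1 x| :=
        intervalIntegral.integral_nonneg ht.1 (fun _ _ => abs_nonneg _)
      have p2 : 0 ≤ ∫ x in α..t, |w x| :=
        intervalIntegral.integral_nonneg ht.1 (fun _ _ => abs_nonneg _)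
      rw [intervalIntegral.integral_add i2.abs i1.abs]
      have := h t ht
      nlinarith [mul_nonneg hC p1])
  intro t ht
  have := key t ht
  have a1 := abs_nonneg (w t)
  have a2 := abs_nonneg (w1 t)
  exact ⟨abs_eq_zero.1 (by linarith), abs_eq_zero.1 (by linarith)⟩

lemma my_layer_inner {T l : ℝ} {P h : ℝ → ℝ} (hT : 0 ≤ T) (hP : Antitone P)
    (hh : ∀ r ∈ Icc 0 T, 0 ≤ ∫ x in (0:ℝ)..r, h x)
    (hi : IntervalIntegrable h volume 0 T) :
    0 ≤ ∫ x in (0:ℝ)..T, (if l < P x then h x else 0) := by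
  set S := {x | x ∈ Icc 0 T ∧ l < P x} with hS
  by_cases hne : S.Nonempty
  · have hbd : BddAbove S := ⟨T, fun x hx => hx.1.2⟩
    set r := sSup S with hr
    have hrT : r ≤ T := csSup_le hne fun x hx => hx.1.2
    have hr0 : 0 ≤ r := by
      obtain ⟨x, hx⟩ := hne
      exact hx.1.1.trans (le_csSup hbd hx)
    have c1 : ∀ x, x < r → l < P x := by
      intro x hx
      obtain ⟨y, hy, hxy⟩ := exists_lt_of_lt_csSup hne hx
      exact hy.2.trans_le (hP hxy.le)
    have c2 : ∀ x, r < x → x ≤ T → ¬ l < P x := by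
      intro x hx hxT hl
      exact absurd (le_csSup hbd (show x ∈ S from ⟨⟨hr0.trans hx.le, hxT⟩, hl⟩)) (not_le.2 hx)
    have e1 : ∀ᵐ x ∂volume, x ∈ uIoc 0 r → (if l < P x then h x else 0) = h x := by
      filter_upwards [(Set.countable_singleton r).ae_notMem volume] with x hx hxm
      rw [uIoc_of_le hr0] at hxm
      rw [if_pos (c1 x (lt_of_le_of_ne hxm.2 hx))]
    have e2 : ∀ x ∈ uIoc r T, (if l < P x then h x else 0) = 0 := by
      intro x hxm
      rw [uIoc_of_le hrT] at hxm
      rw [if_neg (c2 x hxm.1 hxm.2)]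
    have e2' : ∀ᵐ x ∂volume, x ∈ uIoc r T → (if l < P x then h x else 0) = (fun _ => (0:ℝ)) x :=
      Eventually.of_forall e2
    have i1 : IntervalIntegrable (fun x => if l < P x then h x else 0) volume 0 r := by
      have : IntervalIntegrable h volume 0 r := hi.mono_set (by
        rw [uIcc_of_le hr0, uIcc_of_le hT]; exact Icc_subset_Icc_right hrT)
      refine this.congr_ae ?_
      rw [Filter.EventuallyEq, ae_restrict_iff' measurableSet_uIoc]
      filter_upwards [e1] with x hx hxm
      exact (hx hxm).symm
    have i2 : IntervalIntegrable (fun x => if l < P x then h x else 0) volume r T := by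
      have : IntervalIntegrable (fun _ => (0:ℝ)) volume r T := intervalIntegrable_const
      refine this.congr_ae ?_
      rw [Filter.EventuallyEq, ae_restrict_iff' measurableSet_uIoc]
      filter_upwards [e2'] with x hx hxm
      exact (hx hxm).symm
    rw [← intervalIntegral.integral_add_adjacent_intervals i1 i2,
      intervalIntegral.integral_congr_ae e1, intervalIntegral.integral_congr_ae e2']
    simpa using hh r ⟨hr0, hrT⟩
  · apply intervalIntegral.integral_nonneg hT
    intro x hx
    rw [if_neg]
    intro hl
    exact hne ⟨x, hx, hl⟩

lemma my_layer {T : ℝ} {P h : ℝ → ℝ} (hT : 0 ≤ T) (hP : Antitone P) (hP0 : ∀ x, 0 ≤ P x)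
    (hh : ∀ r ∈ Icc 0 T, 0 ≤ ∫ x in (0:ℝ)..r, h x)
    (hi : IntervalIntegrable h volume 0 T) :
    0 ≤ ∫ x in (0:ℝ)..T, P x * h x := by
  have e : ∀ x ∈ uIcc 0 T, P x * h x = ∫ l in Ioc 0 (P 0), (if l < P x then h x else 0) := by
    intro x hx
    rw [uIcc_of_le hT] at hx
    have hle : P x ≤ P 0 := hP hx.1
    have : ∫ l in Ioc 0 (P 0), (if l < P x then h x else 0)
        = ∫ l in Ioc 0 (P 0), (Iio (P x)).indicator (fun _ => h x) l := by
      congr 1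
    rw [this, setIntegral_indicator measurableSet_Iio, setIntegral_const]
    have : Ioc 0 (P 0) ∩ Iio (P x) = Ioo 0 (P x) := by
      ext y; simp only [mem_inter_iff, mem_Ioc, mem_Iio, mem_Ioo]
      constructor
      · rintro ⟨⟨a, b⟩, c⟩; exact ⟨a, c⟩
      · rintro ⟨a, c⟩; exact ⟨⟨a, c.le.trans hle⟩, c⟩
    rw [this]
    simp [hP0 x]
  rw [intervalIntegral.integral_congr e, intervalIntegral_integral_swap]
  · apply integral_nonneg
    intro l
    exact my_layer_inner hT hP hh hi
  · have hm : MeasurableSet {p : ℝ × ℝ | p.2 < P p.1} :=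
      measurableSet_lt measurable_snd (hP.measurable.comp measurable_fst)
    have : (Function.uncurry fun x l => if l < P x then h x else 0)
        = {p : ℝ × ℝ | p.2 < P p.1}.indicator (fun p => h p.1) := by
      ext ⟨x, l⟩
      simp [Function.uncurry, indicator]
    rw [this]
    apply Integrable.indicator _ hm
    have hi' : Integrable h (volume.restrict (uIoc 0 T)) := intervalIntegrable_iff.1 hi
    exact hi'.comp_fst (ν := volume.restrict (Ioc 0 (P 0)))

structure MyCore (R : ℝ) (P g u u1 : ℝ → ℝ) : Prop where
  hR : 0 < R
  hP : Antitone P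
  hP0 : ∀ x, 0 ≤ P x
  hg : Continuous g
  hg0 : ∀ x, 0 ≤ g x
  hL : ∀ B, ∃ L, 0 ≤ L ∧ ∀ x ∈ Icc 0 B, ∀ y ∈ Icc 0 B, |g x - g y| ≤ L * |x - y|
  hd : ∀ t ∈ Icc (-R) R, HasDerivAt u (u1 t) t
  hs : ∀ s ∈ Icc (-R) R, ∀ t ∈ Icc (-R) R, u1 t - u1 s = -∫ x in s..t, P |x| * g (u x)
  hRz : u R = 0
  hRz' : u (-R) = 0
  hpos : ∀ t ∈ Ioo (-R) R, 0 < u t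

namespace MyCore

variable {R : ℝ} {P g u u1 v v1 : ℝ → ℝ}

lemma refl' (h : MyCore R P g u u1) : MyCore R P g (fun t => u (-t)) (fun t => -u1 (-t)) where
  hR := h.hR
  hP := h.hP
  hP0 := h.hP0
  hg := h.hg
  hg0 := h.hg0
  hL := h.hL
  hd := by
    intro t ht
    have h1 := h.hd (-t) ⟨by linarith [ht.2], by linarith [ht.1]⟩
    have := h1.comp t (hasDerivAt_neg t)
    simpa [Function.comp_def] using this
  hs := by
    intro s hs t ht
    have h1 := h.hs (-t) ⟨by linarith [ht.2], by linarith [ht.1]⟩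
      (-s) ⟨by linarith [hs.2], by linarith [hs.1]⟩
    have e : ∫ x in s..t, P |x| * g (u (-x)) = ∫ x in (-t)..(-s), P |x| * g (u x) := by
      rw [← intervalIntegral.integral_comp_neg]
      simp
    rw [e]; linarith
  hRz := h.hRz'
  hRz' := by simpa using h.hRz
  hpos := fun t ht => h.hpos (-t) ⟨by linarith [ht.2], by linarith [ht.1]⟩

lemma uc (h : MyCore R P g u u1) : ContinuousOn u (Icc (-R) R) :=
  fun t ht => (h.hd t ht).continuousAt.continuousWithinAt

lemma nonneg (h : MyCore R P g u u1) : ∀ t ∈ Icc (-R) R, 0 ≤ u t := by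
  intro t ht
  rcases eq_or_lt_of_le ht.1 with e | e
  · rw [← e, h.hRz']
  rcases eq_or_lt_of_le ht.2 with e' | e'
  · rw [e', h.hRz]
  exact (h.hpos t ⟨e, e'⟩).le

lemma intP (h : MyCore R P g u u1) (s t : ℝ) :
    IntervalIntegrable (fun x => P |x|) volume s t := by
  rw [intervalIntegrable_iff]
  have hm : Measurable fun x => P |x| := h.hP.measurable.comp measurable_abs
  refine Measure.integrableOn_of_bounded (M := P 0) (by simp [uIoc])
    hm.aestronglyMeasurable (Eventually.of_forall fun x => ?_)
  rw [Real.norm_of_nonneg (h.hP0 _)]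
  exact h.hP (abs_nonneg x)

lemma intF (h : MyCore R P g u u1) {s t : ℝ} (hs : s ∈ Icc (-R) R) (ht : t ∈ Icc (-R) R) :
    IntervalIntegrable (fun x => P |x| * g (u x)) volume s t :=
  (h.intP s t).mul_continuousOn
    (h.hg.comp_continuousOn (h.uc.mono (uIcc_subset_Icc hs ht)))

lemma anti (h : MyCore R P g u u1) : AntitoneOn u1 (Icc (-R) R) := by
  intro s hs t ht hst
  have h1 := h.hs s hs t ht
  have : 0 ≤ ∫ x in s..t, P |x| * g (u x) :=
    intervalIntegral.integral_nonneg hst fun x _ => mul_nonneg (h.hP0 _) (h.hg0 _)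
  linarith

lemma u1c (h : MyCore R P g u u1) : ContinuousOn u1 (Icc (-R) R) := by
  have hm : -R ∈ Icc (-R) R := ⟨le_rfl, by linarith [h.hR]⟩
  have hM : R ∈ Icc (-R) R := ⟨by linarith [h.hR], le_rfl⟩
  have e : ∀ t ∈ Icc (-R) R, u1 t = u1 (-R) - ∫ x in (-R)..t, P |x| * g (u x) := by
    intro t ht
    linarith [h.hs _ hm t ht]
  have i := h.intF hm hM
  have := intervalIntegral.continuousOn_primitive_interval' i (left_mem_uIcc)
  rw [uIcc_of_le hm.2] at this
  exact (continuousOn_const.sub this).congr e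

lemma uniq (h : MyCore R P g u u1) (k : MyCore R P g v v1) {t0 : ℝ} (ht0 : t0 ∈ Icc (-R) R)
    (h0 : u t0 = v t0) (h1 : u1 t0 = v1 t0) : ∀ t ∈ Icc t0 R, u t = v t ∧ u1 t = v1 t := by
  obtain ⟨B1, hB1⟩ := isCompact_Icc.bddAbove_image h.uc
  obtain ⟨B2, hB2⟩ := isCompact_Icc.bddAbove_image k.uc
  obtain ⟨L, hL0, hL⟩ := h.hL (max B1 B2)
  have hsub : Icc t0 R ⊆ Icc (-R) R := Icc_subset_Icc_left ht0.1
  have lip : ∀ x ∈ Icc (-R) R, |g (u x) - g (v x)| ≤ L * |u x - v x| := by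
    intro x hx
    refine hL _ ⟨h.nonneg x hx, le_max_of_le_left (hB1 (mem_image_of_mem _ hx))⟩ _
      ⟨k.nonneg x hx, le_max_of_le_right (hB2 (mem_image_of_mem _ hx))⟩
  have key := my_uniq (α := t0) (β := R) (C := P 0 * L) (w := fun t => u t - v t)
    (w1 := fun t => u1 t - v1 t) (mul_nonneg (h.hP0 0) hL0) ht0.2
    (fun t ht => (h.hd t (hsub ht)).sub (k.hd t (hsub ht)))
    ((h.u1c.mono hsub).sub (k.u1c.mono hsub)) (by
      intro t ht
      have i1 := h.intF ht0 (hsub ht)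
      have i2 := k.intF ht0 (hsub ht)
      have e : u1 t - v1 t = -∫ x in t0..t, (P |x| * g (u x) - P |x| * g (v x)) := by
        rw [intervalIntegral.integral_sub i1 i2]
        linarith [h.hs t0 ht0 t (hsub ht), k.hs t0 ht0 t (hsub ht)]
      rw [e, abs_neg, ← intervalIntegral.integral_const_mul]
      refine (intervalIntegral.abs_integral_le_integral_abs ht.1).trans ?_
      have cw : ContinuousOn (fun x => P 0 * L * |u x - v x|) (uIcc t0 t) :=
        continuousOn_const.mul
          ((h.uc.sub k.uc).abs.mono (uIcc_subset_Icc ht0 (hsub ht)))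
      apply intervalIntegral.integral_mono_on ht.1 (i1.sub i2).abs cw.intervalIntegrable
      intro x hx
      have hx' : x ∈ Icc (-R) R := ⟨ht0.1.trans hx.1, hx.2.trans ht.2⟩
      rw [← mul_sub, abs_mul, abs_of_nonneg (h.hP0 _), mul_assoc]
      exact mul_le_mul (h.hP (abs_nonneg x)) (lip x hx') (abs_nonneg _) (h.hP0 _))
    (by simp [h0])
  intro t ht
  obtain ⟨a1, a2⟩ := key t ht
  exact ⟨sub_eq_zero.1 a1, sub_eq_zero.1 a2⟩

lemma energy (h : MyCore R P g u u1) {T : ℝ} (hT : T ∈ Icc 0 R) :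
    IntervalIntegrable (fun x => g (u x) * u1 x) volume 0 T ∧
    IntervalIntegrable (fun x => P x * (g (u x) * u1 x)) volume 0 T ∧
    u1 T ^ 2 - u1 0 ^ 2 = -2 * ∫ x in (0:ℝ)..T, P x * (g (u x) * u1 x) := by
  have hR := h.hR
  have z : (0:ℝ) ∈ Icc (-R) R := ⟨by linarith, hR.le⟩
  have hm : -R ∈ Icc (-R) R := ⟨le_rfl, by linarith [h.hR]⟩
  have hM : R ∈ Icc (-R) R := ⟨by linarith [h.hR], le_rfl⟩
  have hT' : T ∈ Icc (-R) R := ⟨by linarith [hT.1], hT.2⟩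
  have c1 : ContinuousOn (fun x => g (u x) * u1 x) (uIcc 0 T) :=
    ((h.hg.comp_continuousOn h.uc).mul h.u1c).mono (uIcc_subset_Icc z hT')
  have i2 : IntervalIntegrable (fun x => P x * (g (u x) * u1 x)) volume 0 T :=
    (h.hP.intervalIntegrable).mul_continuousOn c1
  refine ⟨c1.intervalIntegrable, i2, ?_⟩
  rw [← intervalIntegral.integral_const_mul]
  symm
  have key := MeasureTheory.integral_eq_of_hasDerivAt_off_countable_of_le
    (fun x => u1 x ^ 2) (fun x => -2 * (P x * (g (u x) * u1 x))) hT.1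
    h.hP.countable_not_continuousAt
    ((h.u1c.pow 2).mono (Icc_subset_Icc z.1 hT.2)) ?_ (i2.const_mul _)
  · exact key
  intro x hx
  have hPx : ContinuousAt P x := by
    by_contra hc
    exact hx.2 hc
  have hx0 : 0 < x := hx.1.1
  have hxR : x < R := hx.1.2.trans_le hT.2
  have hx' : x ∈ Icc (-R) R := ⟨by linarith, hxR.le⟩
  have hn : Icc (-R) R ∈ 𝓝 x := Icc_mem_nhds (by linarith) hxR
  have hPc : ContinuousAt (fun y => P |y|) x := by
    refine hPx.congr ?_
    filter_upwards [lt_mem_nhds hx0] with y hy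
    rw [abs_of_pos hy]
  have hF : ContinuousAt (fun y => P |y| * g (u y)) x :=
    hPc.mul (h.hg.continuousAt.comp (h.hd x hx').continuousAt)
  have hsm : StronglyMeasurableAtFilter (fun y => P |y| * g (u y)) (𝓝 x) volume := by
    have := (intervalIntegrable_iff_integrableOn_Icc_of_le hm.2).1 (h.intF hm hM)
    exact ⟨_, hn, this.aestronglyMeasurable⟩
  have hd1 := intervalIntegral.integral_hasDerivAt_right (h.intF z hx') hsm hF
  have hd2 : HasDerivAt u1 (-(P |x| * g (u x))) x := by
    refine (hd1.neg.const_add (u1 0)).congr_of_eventuallyEq ?_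
    filter_upwards [hn] with y hy
    have := h.hs 0 z y hy
    simp only [Pi.neg_apply]
    linarith
  rw [abs_of_pos hx0] at hd2
  refine (hd2.pow 2).congr_deriv ?_
  norm_num
  ring

lemma not_neg (h : MyCore R P g u u1) : ¬ u1 0 < 0 := by
  intro hneg
  have hR := h.hR
  have z : (0:ℝ) ∈ Icc (-R) R := ⟨by linarith, hR.le⟩
  have k := h.refl'
  set v : ℝ → ℝ := fun t => u (-t) with hv
  set v1 : ℝ → ℝ := fun t => -u1 (-t) with hv1
  have hv10 : v1 0 = -u1 0 := by simp [hv1]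
  have hv0 : v 0 = u 0 := by simp [hv]
  have dw : ∀ t ∈ Icc (-R) R, HasDerivAt (fun t => v t - u t) (v1 t - u1 t) t :=
    fun t ht => (k.hd t ht).sub (h.hd t ht)
  have wc : ContinuousOn (fun t => v t - u t) (Icc (-R) R) := k.uc.sub h.uc
  have wR : v R - u R = 0 := by rw [k.hRz, h.hRz, sub_zero]
  have ev := eventually_nhdsWithin_sign_eq_of_deriv_pos (f := fun t => v t - u t) (x₀ := 0)
    (by rw [(dw 0 z).deriv, hv10]; linarith) (by simp [hv0])
  obtain ⟨δ, hδ, hball⟩ := Metric.eventually_nhds_iff.1 ev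
  have near : ∀ t, 0 < t → t < δ → 0 < v t - u t := by
    intro t h1 h2
    have := hball (y := t) (by rw [Real.dist_eq, sub_zero, abs_of_pos h1]; exact h2)
    rw [sub_zero, sign_pos h1] at this
    exact sign_eq_one_iff.1 this
  have hδR : δ ≤ R := by
    by_contra hc
    have := near R hR (not_le.1 hc)
    linarith
  have hsubδ : Icc δ R ⊆ Icc (-R) R := Icc_subset_Icc_left (by linarith)
  have hcomp : IsCompact (Icc δ R ∩ (fun t => v t - u t) ⁻¹' Iic 0) :=
    isCompact_Icc.of_isClosed_subset
      ((wc.mono hsubδ).preimage_isClosed_of_isClosed isClosed_Icc isClosed_Iic) inter_subset_left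
  obtain ⟨T, ⟨hTm, hTw⟩, hTl⟩ := hcomp.exists_isLeast ⟨R, ⟨hδR, le_rfl⟩, wR.le⟩
  have hT0 : 0 < T := hδ.trans_le hTm.1
  have hTR : T ≤ R := hTm.2
  have hT' : T ∈ Icc (-R) R := hsubδ hTm
  have pos : ∀ t, 0 < t → t < T → 0 < v t - u t := by
    intro t h1 h2
    by_cases hc : t < δ
    · exact near t h1 hc
    · by_contra hn
      exact absurd (hTl ⟨⟨not_lt.1 hc, h2.le.trans hTR⟩, not_lt.1 hn⟩) (not_le.2 h2)
  have hwT : v T - u T = 0 := by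
    refine le_antisymm hTw ?_
    have ht : Tendsto (fun t => v t - u t) (𝓝[<] T) (𝓝 (v T - u T)) :=
      (dw T hT').continuousAt.tendsto.mono_left nhdsWithin_le_nhds
    refine ge_of_tendsto ht ?_
    filter_upwards [Ioo_mem_nhdsLT hT0] with t ht
    exact (pos t ht.1 ht.2).le
  have hw1T : v1 T - u1 T ≤ 0 := by
    by_contra hc
    have ev2 := eventually_nhdsWithin_sign_eq_of_deriv_pos (f := fun t => v t - u t) (x₀ := T)
      (by rw [(dw T hT').deriv]; linarith) hwT
    have ev3 : ∀ᶠ t in 𝓝[<] T, False := by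
      filter_upwards [ev2.filter_mono nhdsWithin_le_nhds, Ioo_mem_nhdsLT hT0] with t h1 h2
      rw [sign_pos (pos t h2.1 h2.2), sign_neg (sub_neg.2 h2.2)] at h1
      exact absurd h1 (by decide)
    exact ev3.exists.elim fun _ hf => hf
  have hu1T : u1 T ≤ u1 0 := h.anti z hT' hT0.le
  obtain ⟨iu, iPu, eu⟩ := h.energy ⟨hT0.le, hTR⟩
  obtain ⟨iv, iPv, ev⟩ := k.energy ⟨hT0.le, hTR⟩
  have hlay : 0 ≤ ∫ x in (0:ℝ)..T, P x * (g (v x) * v1 x - g (u x) * u1 x) := by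
    apply my_layer hT0.le h.hP h.hP0 _ (iv.sub iu)
    intro r hr
    have hG : ∀ x, HasDerivAt (fun x => ∫ y in (0:ℝ)..x, g y) (g x) x := fun x =>
      intervalIntegral.integral_hasDerivAt_right (h.hg.intervalIntegrable _ _)
        (h.hg.stronglyMeasurableAtFilter _ _) h.hg.continuousAt
    have hr' : r ∈ Icc (-R) R := ⟨by linarith [hr.1], hr.2.trans hTR⟩
    have e : ∫ x in (0:ℝ)..r, (g (v x) * v1 x - g (u x) * u1 x)
        = ((∫ y in (0:ℝ)..v r, g y) - ∫ y in (0:ℝ)..u r, g y)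
          - ((∫ y in (0:ℝ)..v 0, g y) - ∫ y in (0:ℝ)..u 0, g y) := by
      apply intervalIntegral.integral_eq_sub_of_hasDerivAt
        (f := fun x => (∫ y in (0:ℝ)..v x, g y) - ∫ y in (0:ℝ)..u x, g y)
      · intro x hx
        have hx' := uIcc_subset_Icc z hr' hx
        exact ((hG (v x)).comp x (k.hd x hx')).sub ((hG (u x)).comp x (h.hd x hx'))
      · exact (iv.sub iu).mono_set (by
          rw [uIcc_of_le hr.1, uIcc_of_le hT0.le]; exact Icc_subset_Icc_right hr.2)
    rw [e, hv0, sub_self, sub_zero, intervalIntegral.integral_interval_sub_left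
      (h.hg.intervalIntegrable _ _) (h.hg.intervalIntegrable _ _)]
    apply intervalIntegral.integral_nonneg _ (fun x _ => h.hg0 x)
    rcases eq_or_lt_of_le hr.1 with e0 | e0
    · rw [← e0, hv0]
    rcases eq_or_lt_of_le hr.2 with e1 | e1
    · rw [e1]; linarith
    · linarith [pos r e0 e1]
  have hsplit : ∫ x in (0:ℝ)..T, P x * (g (v x) * v1 x - g (u x) * u1 x)
      = (∫ x in (0:ℝ)..T, P x * (g (v x) * v1 x)) - ∫ x in (0:ℝ)..T, P x * (g (u x) * u1 x) := by
    rw [← intervalIntegral.integral_sub iPv iPu]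
    congr 1; ext x; ring
  have hsq : v1 T ^ 2 ≤ u1 T ^ 2 := by
    have : v1 0 ^ 2 = u1 0 ^ 2 := by rw [hv10]; ring
    linarith
  have heq : u1 T = v1 T := by nlinarith
  have e1 : v1 T = -u1 (-T) := rfl
  have e2 : v T = u (-T) := rfl
  have e3 : v (-T) = u T := by simp [hv]
  have e4 : v1 (-T) = -u1 T := by simp [hv1]
  have := (h.uniq k (t0 := -T) ⟨by linarith, by linarith⟩ (by linarith) (by linarith)
    0 ⟨by linarith, hR.le⟩).2
  linarith

lemma final (h : MyCore R P g u u1) :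
    (∀ t ∈ Icc (-R) R, u t = u (-t)) ∧ MonotoneOn u (Icc (-R) 0) := by
  have hR := h.hR
  have z : (0:ℝ) ∈ Icc (-R) R := ⟨by linarith, hR.le⟩
  have n1 := h.not_neg
  have n2 := h.refl'.not_neg
  simp only [neg_zero] at n2
  have e0 : u1 0 = 0 := by linarith
  have hu := h.uniq h.refl' z (by simp) (by simp [e0])
  constructor
  · intro t ht
    rcases le_total 0 t with h0 | h0
    · exact (hu t ⟨h0, ht.2⟩).1
    · have := (hu (-t) ⟨by linarith, by linarith [ht.1]⟩).1
      simp only [neg_neg] at this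
      exact this.symm
  · have hsub : Icc (-R) 0 ⊆ Icc (-R) R := Icc_subset_Icc_right hR.le
    apply monotoneOn_of_deriv_nonneg (convex_Icc _ _) (h.uc.mono hsub)
    · intro x hx
      exact (h.hd x (hsub (interior_subset hx))).differentiableAt.differentiableWithinAt
    · intro x hx
      have hx' := interior_subset hx
      rw [(h.hd x (hsub hx')).deriv, ← e0]
      exact h.anti (hsub hx') z hx'.2

end MyCore

/-- **Symmetry of positive solutions.** If `q ≥ 0` is symmetric
about `c = (a+b)/2` and non-decreasing on `[a,c]`, then every positive solution
of the Dirichlet problem `u'' + q(t) g(u) = 0`, `u(a) = 0 = u(b)`, is symmetric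
and non-decreasing on `[a,c]`. -/
theorem symmetry_of_positive_solutions
    (a b : ℝ) (hab : a < b)
    (g : ℝ → ℝ)
    (hg_C1 : ContDiffOn ℝ 1 g (Set.Ici 0))
    (hg0 : g 0 = 0)
    (hg_pos : ∀ s > 0, 0 < g s)
    (hg_ext : ∀ s ≤ (0 : ℝ), g s = 0)
    (q : ℝ → ℝ)
    (hq_int : IntegrableOn q (Set.Icc a b))
    (hq_nonneg : ∀ᵐ t ∂(volume.restrict (Set.Icc a b)), 0 ≤ q t)
    (hq_ne : ¬ (∀ᵐ t ∂(volume.restrict (Set.Icc a b)), q t = 0))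
    (hq_symm : ∀ᵐ t ∂(volume.restrict (Set.Icc a b)), q t = q (a + b - t))
    (hq_mono : MonotoneOn q (Set.Icc a ((a + b) / 2)))
    (u u₁ : ℝ → ℝ)
    (hu_sol : IsCaraSol a b (fun s x => q s * g x) u u₁)
    (hua : u a = 0) (hub : u b = 0)
    (hu_pos : ∀ t ∈ Set.Ioo a b, 0 < u t) :
    (∀ t ∈ Set.Icc a b, u t = u (a + b - t)) ∧
    MonotoneOn u (Set.Icc a ((a + b) / 2)) := by

  obtain ⟨hd, hint, heq⟩ := hu_sol
  set c := (a + b) / 2 with hc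
  set R := (b - a) / 2 with hRd
  have hR : 0 < R := by rw [hRd]; linarith
  have ha : a = c - R := by rw [hc, hRd]; ring
  have hb : b = c + R := by rw [hc, hRd]; ring
  set P : ℝ → ℝ := fun y => max 0 (q (c - max 0 (min y R))) with hPd
  have hP : Antitone P := by
    intro x y hxy
    refine max_le_max le_rfl (hq_mono ?_ ?_ ?_)
    · exact ⟨by rw [ha]; linarith [max_le hR.le (min_le_right y R)],
        by linarith [le_max_left 0 (min y R)]⟩
    · exact ⟨by rw [ha]; linarith [max_le hR.le (min_le_right x R)],
        by linarith [le_max_left 0 (min x R)]⟩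
    · have : max 0 (min x R) ≤ max 0 (min y R) :=
        max_le_max le_rfl (min_le_min hxy le_rfl)
      linarith
  have hgm : ∀ x, g x = g (max 0 x) := by
    intro x
    rcases le_total 0 x with h | h
    · rw [max_eq_right h]
    · rw [max_eq_left h, hg0, hg_ext x h]
  have hgc : Continuous g := by
    have : Continuous fun x => g (max 0 x) :=
      hg_C1.continuousOn.comp_continuous (by fun_prop) (fun x => mem_Ici.2 (le_max_left _ _))
    exact this.congr fun x => (hgm x).symm
  have hae : ∀ᵐ x ∂volume, x ∈ Icc a b → q x = P |x - c| := by
    rw [ae_restrict_iff' measurableSet_Icc] at hq_nonneg hq_symm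
    filter_upwards [hq_nonneg, hq_symm] with x h1 h2 hx
    have h1 := h1 hx
    have h2 := h2 hx
    have hx1 := hx.1
    have hx2 := hx.2
    have hxR : |x - c| ≤ R := abs_le.2 ⟨by linarith, by linarith⟩
    simp only [hPd]
    rw [min_eq_left hxR, max_eq_right (abs_nonneg (x - c))]
    rcases le_total x c with h | h
    · rw [abs_of_nonpos (by linarith), show c - -(x - c) = x by ring, max_eq_right h1]
    · rw [abs_of_nonneg (by linarith), show c - (x - c) = a + b - x by rw [hc]; ring, ← h2,
        max_eq_right h1]
  have core : MyCore R P g (fun t => u (c + t)) (fun t => u₁ (c + t)) :=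
    { hR := hR
      hP := hP
      hP0 := fun x => le_max_left _ _
      hg := hgc
      hg0 := fun x => by
        rcases le_or_gt x 0 with h | h
        · exact (hg_ext x h).ge
        · exact (hg_pos x h).le
      hL := by
        intro B
        obtain ⟨K, hK⟩ := (hg_C1.mono (show Icc 0 B ⊆ Ici 0 from fun x hx => hx.1)).exists_lipschitzOnWith
          one_ne_zero (convex_Icc _ _) isCompact_Icc
        refine ⟨K, K.2, fun x hx y hy => ?_⟩
        have := hK.dist_le_mul x hx y hy
        rwa [Real.dist_eq, Real.dist_eq] at this
      hd := by
        intro t ht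
        exact (hd (c + t) ⟨by linarith [ht.1], by linarith [ht.2]⟩).comp_const_add c t
      hs := by
        intro s hs t ht
        have hs' : c + s ∈ Icc a b := ⟨by linarith [hs.1], by linarith [hs.2]⟩
        have ht' : c + t ∈ Icc a b := ⟨by linarith [ht.1], by linarith [ht.2]⟩
        have ha' : a ∈ Icc a b := ⟨le_rfl, hab.le⟩
        have hm : ∀ x ∈ Icc a b, ∀ y ∈ Icc a b,
            IntervalIntegrable (fun s => q s * g (u s)) volume x y := fun x hx y hy =>
          hint.mono_set (by rw [uIcc_of_le hab.le]; exact uIcc_subset_Icc hx hy)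
        have e1 := heq _ hs'
        have e2 := heq _ ht'
        have e3 := intervalIntegral.integral_add_adjacent_intervals (hm a ha' _ hs')
          (hm _ hs' _ ht')
        have e4 : ∫ x in (c + s)..(c + t), q x * g (u x)
            = ∫ x in (c + s)..(c + t), P |x - c| * g (u x) := by
          apply intervalIntegral.integral_congr_ae
          filter_upwards [hae] with x hx hxm
          rw [hx (uIcc_subset_Icc hs' ht' (uIoc_subset_uIcc hxm))]
        have e5 := intervalIntegral.integral_comp_add_left
          (a := s) (b := t) (fun x => P |x - c| * g (u x)) c
        simp only [add_sub_cancel_left] at e5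
        simp only at e1 e2
        rw [e5, ← e4]
        linarith
      hRz := by simp only [← hb]; exact hub
      hRz' := by simp only [← sub_eq_add_neg, ← ha]; exact hua
      hpos := fun t ht => hu_pos _ ⟨by linarith [ht.1], by linarith [ht.2]⟩ }
  obtain ⟨f1, f2⟩ := core.final
  constructor
  · intro t ht
    have := f1 (t - c) ⟨by linarith [ht.1], by linarith [ht.2]⟩
    rw [show c + (t - c) = t by ring, show c + -(t - c) = a + b - t by rw [hc]; ring] at this
    exact this
  · intro x hx y hy hxy
    have := f2 (a := x - c) ⟨by linarith [hx.1], by linarith [hx.2]⟩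
      (b := y - c) ⟨by linarith [hy.1], by linarith [hy.2]⟩ (by linarith)
    simpa using this
end

section
/- (Uniqueness for the Dirichlet problem with symmetric BV weight.) Let a<b, c := (a+b)/2, let g satisfy (g₊) and (g_s), and let q ∈ BV([a,b]) be such that q ≥ 0 a.e., q ≢ 0, q(t) = q(a+b−t) for a.e. t ∈ [a,b], and q is non-decreasing on [a,c]. Then the Dirichlet problem u'' + q(t) g(u) = 0, u(a) = 0 = u(b), has at most one positive solution. -/
open Set MeasureTheory Filter Topology

def DSol (a b : ℝ) (q g u u₁ : ℝ → ℝ) : Prop :=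
  IsCaraSol a b (fun s x => q s * g x) u u₁ ∧ u a = 0 ∧ u b = 0 ∧ ∀ t ∈ Set.Ioo a b, 0 < u t

lemma aux_parts {a s : ℝ} (has : a ≤ s) {F f H h : ℝ → ℝ}
    (hf : IntervalIntegrable f volume a s) (hh : IntervalIntegrable h volume a s)
    (hF : ∀ t ∈ Icc a s, F t = F a + ∫ x in a..t, f x)
    (hH : ∀ t ∈ Icc a s, H t = H a + ∫ x in a..t, h x) :
    ∫ x in a..s, (f x * H x + F x * h x) = F s * H s - F a * H a := by
  have hc : ∀ c : ℝ, AbsolutelyContinuousOnInterval (fun _ => c) a s := fun c =>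
    (LipschitzWith.const c).lipschitzOnWith.absolutelyContinuousOnInterval
  have h1 := (hc (F a)).add (hf.absolutelyContinuousOnInterval_intervalIntegral (c := a) (by simp))
  have h2 := (hc (H a)).add (hh.absolutelyContinuousOnInterval_intervalIntegral (c := a) (by simp))
  have h3 := h1.integral_deriv_mul_eq_sub h2
  have e : ∀ t ∈ Icc a s, (F t = ((fun _ => F a) + fun x => ∫ v in a..x, f v : ℝ → ℝ) t) ∧ 
    (H t = ((fun _ => H a) + fun x => ∫ v in a..x, h v : ℝ → ℝ) t) := by
    intro t ht
    exact ⟨hF t ht, hH t ht⟩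
  rw [← (e s ⟨has, le_rfl⟩).1, ← (e s ⟨has, le_rfl⟩).2, ← (e a ⟨le_rfl, has⟩).1,
    ← (e a ⟨le_rfl, has⟩).2] at h3
  rw [← h3]
  apply intervalIntegral.integral_congr_ae
  filter_upwards [hf.ae_hasDerivAt_integral, hh.ae_hasDerivAt_integral] with x hx₁ hx₂ hx₃
  have hx₄ : x ∈ uIcc a s := uIoc_subset_uIcc hx₃
  have hx5 : x ∈ Icc a s := by rwa [uIcc_of_le has] at hx₄
  have d1 := ((hasDerivAt_const x (F a)).add (hx₁ hx₄ a (by simp))).deriv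
  have d2 := ((hasDerivAt_const x (H a)).add (hx₂ hx₄ a (by simp))).deriv
  rw [d1, d2, ← (e x hx5).1, ← (e x hx5).2]
  simp

lemma aux_stieltjes {a s : ℝ} (has : a ≤ s) {q ψ φ : ℝ → ℝ} (hq : MonotoneOn q (Icc a s))
    (hψ : ContinuousOn ψ (Icc a s)) (hφ : ∀ t ∈ Icc a s, φ t = ∫ x in a..t, ψ x)
    (hφ0 : ∀ t ∈ Icc a s, 0 ≤ φ t) :
    ∫ x in a..s, q x * ψ x ≤ q s * φ s := by
  obtain ⟨C, hC⟩ := isCompact_Icc.exists_bound_of_continuousOn hψ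
  have sub : ∀ r ∈ Icc a s, ∀ r' ∈ Icc a s, r ≤ r' → uIcc r r' ⊆ Icc a s := by
    intro r hr r' hr' h
    rw [uIcc_of_le h]; exact Icc_subset_Icc hr.1 hr'.2
  have hqi : ∀ r ∈ Icc a s, ∀ r' ∈ Icc a s, r ≤ r' → IntervalIntegrable q volume r r' := by
    intro r hr r' hr' h
    exact (hq.mono (sub r hr r' hr' h)).intervalIntegrable
  have hψi : ∀ r ∈ Icc a s, ∀ r' ∈ Icc a s, r ≤ r' → IntervalIntegrable ψ volume r r' := by
    intro r hr r' hr' h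
    exact (hψ.mono (sub r hr r' hr' h)).intervalIntegrable
  have hqψ : ∀ r ∈ Icc a s, ∀ r' ∈ Icc a s, r ≤ r' →
      IntervalIntegrable (fun x => q x * ψ x) volume r r' := by
    intro r hr r' hr' h
    exact (hqi r hr r' hr' h).mul_continuousOn (hψ.mono (sub r hr r' hr' h))
  have ha : a ∈ Icc a s := ⟨le_rfl, has⟩
  have hs : s ∈ Icc a s := ⟨has, le_rfl⟩
  set D : ℝ → ℝ := fun r => q r * φ r - ∫ x in a..r, q x * ψ x with hD
  have step : ∀ r ∈ Icc a s, ∀ r' ∈ Icc a s, r ≤ r' →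
      -(C * (q r' - q r) * (r' - r)) ≤ D r' - D r := by
    intro r hr r' hr' h
    have e1 : (∫ x in a..r', q x * ψ x) = (∫ x in a..r, q x * ψ x) + ∫ x in r..r', q x * ψ x :=
      (intervalIntegral.integral_add_adjacent_intervals (hqψ a ha r hr hr.1)
        (hqψ r hr r' hr' h)).symm
    have e2 : φ r' = φ r + ∫ x in r..r', ψ x := by
      rw [hφ r' hr', hφ r hr]
      exact (intervalIntegral.integral_add_adjacent_intervals (hψi a ha r hr hr.1)
        (hψi r hr r' hr' h)).symm
    have e3 : (∫ x in r..r', (q x - q r) * ψ x) =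
        (∫ x in r..r', q x * ψ x) - q r * ∫ x in r..r', ψ x := by
      rw [← intervalIntegral.integral_const_mul, ← intervalIntegral.integral_sub
        (hqψ r hr r' hr' h) ((hψi r hr r' hr' h).const_mul _)]
      congr 1; ext x; ring
    have e4 : ‖∫ x in r..r', (q x - q r) * ψ x‖ ≤ (C * (q r' - q r)) * |r' - r| := by
      apply intervalIntegral.norm_integral_le_of_norm_le_const
      intro x hx
      rw [uIoc_of_le h] at hx
      have hx' : x ∈ Icc a s := ⟨hr.1.trans hx.1.le, hx.2.trans hr'.2⟩
      have m1 := hq hr hx' hx.1.le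
      have m2 := hq hx' hr' hx.2
      rw [norm_mul, Real.norm_eq_abs, abs_of_nonneg (by linarith)]
      have := hC x hx'
      have h0 := norm_nonneg (ψ x)
      nlinarith
    rw [abs_of_nonneg (by linarith : 0 ≤ r' - r), Real.norm_eq_abs] at e4
    have e5 := (abs_le.1 e4).2
    have e6 := mul_nonneg (sub_nonneg.2 (hq hr hr' h)) (hφ0 r' hr')
    simp only [hD, e1]
    rw [e3] at e5
    rw [e2] at e6 ⊢
    linarith
  have tele : ∀ n : ℕ, -(C * (q s - q a) * (s - a)) / ((n : ℝ) + 1) ≤ D s - D a := by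
    intro n
    have hn : (0 : ℝ) < (n : ℝ) + 1 := by positivity
    set h := (s - a) / ((n : ℝ) + 1) with hh
    have hh0 : 0 ≤ h := div_nonneg (by linarith) hn.le
    have hhs : ((n : ℝ) + 1) * h = s - a := by rw [hh]; field_simp
    have key : ∀ i : ℕ, i ≤ n + 1 → -(C * (q (a + i * h) - q a) * h) ≤ D (a + i * h) - D a := by
      intro i
      induction i with
      | zero => intro _; simp
      | succ k ih =>
        intro hk
        have hk' : ((k : ℝ) + 1) ≤ (n : ℝ) + 1 := by exact_mod_cast hk
        have k0 : (0 : ℝ) ≤ k := by positivity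
        have b1 := mul_le_mul_of_nonneg_right hk' hh0
        have b2 := mul_nonneg k0 hh0
        have := ih (by omega)
        have st := step (a + k * h) ⟨by linarith, by linarith⟩ (a + (k + 1 : ℕ) * h)
          ⟨by push_cast; linarith, by push_cast; linarith⟩ (by push_cast; linarith)
        have e : (a + (k + 1 : ℕ) * h) - (a + k * h) = h := by push_cast; ring
        rw [e] at st
        linarith
    have := key (n + 1) le_rfl
    have e : a + ((n + 1 : ℕ) : ℝ) * h = s := by push_cast; linarith
    rw [e] at this
    calc _ = -(C * (q s - q a) * h) := by rw [hh]; ring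
      _ ≤ _ := this
  have lim : Tendsto (fun n : ℕ => -(C * (q s - q a) * (s - a)) / ((n : ℝ) + 1)) atTop (𝓝 0) := by
    have := (tendsto_one_div_add_atTop_nhds_zero_nat (𝕜 := ℝ)).const_mul (-(C * (q s - q a) * (s - a)))
    simpa [div_eq_mul_inv] using this
  have fin := le_of_tendsto' lim tele
  have φa : φ a = 0 := by rw [hφ a ha]; simp
  simp only [hD, φa] at fin
  simp at fin
  linarith

lemma DSol.int {a b : ℝ} {q g u u₁ : ℝ → ℝ} (h : DSol a b q g u u₁) :
    IntervalIntegrable (fun s => q s * g (u s)) volume a b := h.1.2.1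

lemma DSol.int' {a b : ℝ} {q g u u₁ : ℝ → ℝ} (h : DSol a b q g u u₁) {r s : ℝ}
    (hr : r ∈ Icc a b) (hs : s ∈ Icc a b) :
    IntervalIntegrable (fun s => q s * g (u s)) volume r s := by
  have hab : a ≤ b := hr.1.trans hr.2
  exact h.int.mono_set (by rw [uIcc_of_le hab]; exact uIcc_subset_Icc hr hs)

lemma DSol.diff {a b : ℝ} {q g u u₁ : ℝ → ℝ} (h : DSol a b q g u u₁) {t : ℝ}
    (ht : t ∈ Icc a b) : HasDerivAt u (u₁ t) t := h.1.1 t ht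

lemma DSol.cont {a b : ℝ} {q g u u₁ : ℝ → ℝ} (h : DSol a b q g u u₁) :
    ContinuousOn u (Icc a b) := fun _ ht => (h.diff ht).continuousAt.continuousWithinAt

lemma DSol.eq {a b : ℝ} {q g u u₁ : ℝ → ℝ} (h : DSol a b q g u u₁) {t : ℝ}
    (ht : t ∈ Icc a b) : u₁ t = u₁ a - ∫ s in a..t, q s * g (u s) := h.1.2.2 t ht

lemma DSol.cont₁ {a b : ℝ} (hab : a ≤ b) {q g u u₁ : ℝ → ℝ} (h : DSol a b q g u u₁) :
    ContinuousOn u₁ (Icc a b) := by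
  have h1 := (h.int.absolutelyContinuousOnInterval_intervalIntegral (c := a) (by simp)).continuousOn
  rw [uIcc_of_le hab] at h1
  exact ((continuousOn_const (c := u₁ a)).sub h1).congr fun t ht => h.eq ht

lemma DSol.nonneg {a b : ℝ} {q g u u₁ : ℝ → ℝ} (h : DSol a b q g u u₁) {t : ℝ}
    (ht : t ∈ Icc a b) : 0 ≤ u t := by
  rcases eq_or_lt_of_le ht.1 with e | e
  · rw [← e, h.2.1]
  rcases eq_or_lt_of_le ht.2 with e' | e'
  · rw [e', h.2.2.1]
  exact (h.2.2.2 t ⟨e, e'⟩).le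

lemma DSol.eq₀ {a b : ℝ} (hab : a ≤ b) {q g u u₁ : ℝ → ℝ} (h : DSol a b q g u u₁) {t : ℝ}
    (ht : t ∈ Icc a b) : u t = u a + ∫ s in a..t, u₁ s := by
  have hsub : uIcc a t ⊆ Icc a b := uIcc_subset_Icc ⟨le_rfl, hab⟩ ht
  rw [intervalIntegral.integral_eq_sub_of_hasDerivAt (f := u) (fun x hx => h.diff (hsub hx))
    ((h.cont₁ hab).mono hsub).intervalIntegrable]
  ring

lemma DSol.anti {a b : ℝ} {q g u u₁ : ℝ → ℝ} (h : DSol a b q g u u₁)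
    (hg : ∀ s, 0 ≤ g s) (hq : ∀ᵐ t, t ∈ Icc a b → 0 ≤ q t) : AntitoneOn u₁ (Icc a b) := by
  intro r hr s hs hrs
  have ha : a ∈ Icc a b := ⟨le_rfl, hr.1.trans hr.2⟩
  rw [h.eq hr, h.eq hs, ← intervalIntegral.integral_add_adjacent_intervals (h.int' ha hr)
    (h.int' hr hs)]
  have : 0 ≤ ∫ x in r..s, q x * g (u x) := by
    apply intervalIntegral.integral_nonneg_of_ae_restrict hrs
    rw [EventuallyLE, ae_restrict_iff' measurableSet_Icc]
    filter_upwards [hq] with x hx hxx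
    exact mul_nonneg (hx ⟨hr.1.trans hxx.1, hxx.2.trans hs.2⟩) (hg _)
  linarith

lemma DSol.rolle {a b : ℝ} {q g u u₁ : ℝ → ℝ} (h : DSol a b q g u u₁)
    (hg : ∀ s, 0 ≤ g s) (hq : ∀ᵐ t, t ∈ Icc a b → 0 ≤ q t) {r s : ℝ} (hr : r ∈ Icc a b)
    (hs : s ∈ Icc a b) (hrs : r < s) (e : u r = u s) : 0 ≤ u₁ r := by
  have sub : Icc r s ⊆ Icc a b := Icc_subset_Icc hr.1 hs.2
  obtain ⟨x, hx, hx0⟩ := exists_hasDerivAt_eq_zero hrs (h.cont.mono sub) e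
    (fun x hx => h.diff (sub ⟨hx.1.le, hx.2.le⟩))
  rw [← hx0]
  exact h.anti hg hq hr (sub ⟨hx.1.le, hx.2.le⟩) hx.1.le

lemma DSol.energy {a b : ℝ} {q g u u₁ : ℝ → ℝ} (h : DSol a b q g u u₁) {s : ℝ}
    (hs : s ∈ Icc a b) :
    u₁ s ^ 2 - u₁ a ^ 2 = - 2 * ∫ x in a..s, q x * (g (u x) * u₁ x) := by
  have ha : a ∈ Icc a b := ⟨le_rfl, hs.1.trans hs.2⟩
  have hi := (h.int' ha hs).neg
  have hF : ∀ t ∈ Icc a s, u₁ t = u₁ a + ∫ x in a..t, -(fun s => q s * g (u s)) x := by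
    intro t ht
    rw [h.eq ⟨ht.1, ht.2.trans hs.2⟩, intervalIntegral.integral_neg]
    ring
  have := aux_parts hs.1 hi hi hF hF
  rw [show u₁ s ^ 2 - u₁ a ^ 2 = u₁ s * u₁ s - u₁ a * u₁ a by ring, ← this,
    ← intervalIntegral.integral_const_mul]
  congr 1; ext x; simp only [Pi.neg_apply]; ring

lemma DSol.reflect {a b : ℝ} (hab : a ≤ b) {q g u u₁ : ℝ → ℝ} (h : DSol a b q g u u₁)
    (hq : ∀ᵐ t, t ∈ Icc a b → q t = q (a + b - t)) :
    DSol a b q g (fun t => u (a + b - t)) (fun t => - u₁ (a + b - t)) := by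
  have hb : b ∈ Icc a b := ⟨hab, le_rfl⟩
  have ha : a ∈ Icc a b := ⟨le_rfl, hab⟩
  have hmem : ∀ t ∈ Icc a b, a + b - t ∈ Icc a b := fun t ht =>
    ⟨by linarith [ht.2], by linarith [ht.1]⟩
  refine ⟨⟨?_, ?_, ?_⟩, ?_, ?_, ?_⟩
  · intro t ht
    have := (h.diff (hmem t ht)).comp t ((hasDerivAt_id t).const_sub (a + b))
    convert! this using 1
    ring
  · have h1 := (h.int.comp_sub_left (a + b)).symm
    simp only [add_sub_cancel_left, add_sub_cancel_right] at h1
    refine h1.congr_ae ?_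
    rw [EventuallyEq, uIoc_of_le hab, ae_restrict_iff' measurableSet_Ioc]
    filter_upwards [hq] with x hx hxx
    rw [← hx ⟨hxx.1.le, hxx.2⟩]
  · intro t ht
    have e1 : (∫ s in a..t, q s * g (u (a + b - s))) =
        ∫ s in a..t, (fun x => q x * g (u x)) (a + b - s) := by
      apply intervalIntegral.integral_congr_ae
      filter_upwards [hq] with x hx hxx
      rw [uIoc_of_le ht.1] at hxx
      rw [← hx ⟨hxx.1.le, hxx.2.trans ht.2⟩]
    simp only
    rw [e1, intervalIntegral.integral_comp_sub_left (fun x => q x * g (u x)) (a + b), h.eq (hmem t ht), add_sub_cancel_left,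
      h.eq hb, ← intervalIntegral.integral_add_adjacent_intervals (h.int' ha (hmem t ht))
        (h.int' (hmem t ht) hb)]
    ring
  · simp [h.2.2.1]
  · simp [h.2.1]
  · intro t ht
    exact h.2.2.2 _ ⟨by linarith [ht.2], by linarith [ht.1]⟩

lemma aux_crossing {a b s : ℝ} {q g u u₁ v v₁ : ℝ → ℝ}
    (hu : DSol a b q g u u₁) (hv : DSol a b q g v v₁) (hgc : Continuous g)
    (hg : ∀ s, 0 ≤ g s) (hs : s ∈ Ioc a b) (hm : MonotoneOn q (Icc a s))
    (hva : 0 ≤ v₁ a) (hlt : v₁ a < u₁ a) (he : u s = v s) (hle : ∀ t ∈ Icc a s, v t ≤ u t) :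
    v₁ s ^ 2 < u₁ s ^ 2 ∧ u₁ s ≤ v₁ s := by
  have hab : a ≤ b := hs.1.le.trans hs.2
  have hs' : s ∈ Icc a b := ⟨hs.1.le, hs.2⟩
  have sub : Icc a s ⊆ Icc a b := Icc_subset_Icc le_rfl hs.2
  constructor
  · have cu : ContinuousOn (fun x => g (u x) * u₁ x) (Icc a s) :=
      ((hgc.comp_continuousOn hu.cont).mul (hu.cont₁ hab)).mono sub
    have cv : ContinuousOn (fun x => g (v x) * v₁ x) (Icc a s) :=
      ((hgc.comp_continuousOn hv.cont).mul (hv.cont₁ hab)).mono sub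
    set φ : ℝ → ℝ := fun t => (∫ x in (0 : ℝ)..u t, g x) - ∫ x in (0 : ℝ)..v t, g x with hφ
    have hG : ∀ x, HasDerivAt (fun y => ∫ x in (0 : ℝ)..y, g x) (g x) x := fun x =>
      (hgc.integral_hasStrictDerivAt 0 x).hasDerivAt
    have dφ : ∀ t ∈ Icc a s, HasDerivAt φ (g (u t) * u₁ t - g (v t) * v₁ t) t := fun t ht =>
      ((hG (u t)).comp t (hu.diff (sub ht))).sub ((hG (v t)).comp t (hv.diff (sub ht)))
    have φa : φ a = 0 := by simp [hφ, hu.2.1, hv.2.1]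
    have φs : φ s = 0 := by simp [hφ, he]
    have key := aux_stieltjes hs.1.le (φ := φ) (ψ := fun x => g (u x) * u₁ x - g (v x) * v₁ x)
      hm (cu.sub cv) (by
      intro t ht
      have hsub : uIcc a t ⊆ Icc a s := uIcc_subset_Icc ⟨le_rfl, hs.1.le⟩ ht
      rw [intervalIntegral.integral_eq_sub_of_hasDerivAt (f := φ) (fun x hx => dφ x (hsub hx))
        ((cu.sub cv).mono hsub).intervalIntegrable, φa, sub_zero]) (by
      intro t ht
      simp only [hφ]
      rw [intervalIntegral.integral_interval_sub_left (hgc.intervalIntegrable _ _)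
        (hgc.intervalIntegrable _ _)]
      exact intervalIntegral.integral_nonneg (hle t ht) fun x _ => hg x)
    have hu' := hu.energy hs'
    have hv' := hv.energy hs'
    have hqi : IntervalIntegrable q volume a s :=
      MonotoneOn.intervalIntegrable (by rwa [uIcc_of_le hs.1.le])
    have e1 : (∫ x in a..s, q x * (g (u x) * u₁ x - g (v x) * v₁ x)) =
        (∫ x in a..s, q x * (g (u x) * u₁ x)) - ∫ x in a..s, q x * (g (v x) * v₁ x) := by
      rw [← intervalIntegral.integral_sub
        (hqi.mul_continuousOn (by rwa [uIcc_of_le hs.1.le]))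
        (hqi.mul_continuousOn (by rwa [uIcc_of_le hs.1.le]))]
      congr 1; ext x; ring
    rw [φs, mul_zero] at key
    have key' := e1 ▸ key
    nlinarith
  · have hd := ((hu.diff hs').sub (hv.diff hs'))
    have := (hasDerivAt_iff_tendsto_slope_left_right.1 hd).1
    have h0 : u₁ s - v₁ s ≤ 0 := by
      apply le_of_tendsto this
      filter_upwards [Ioo_mem_nhdsLT hs.1] with t ht
      rw [slope_def_field]
      apply div_nonpos_of_nonneg_of_nonpos
      · have := hle t ⟨ht.1.le, ht.2.le⟩
        simp only [Pi.sub_apply]; linarith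
      · linarith [ht.2]
    linarith

lemma aux_first {a c : ℝ} {w : ℝ → ℝ} {d : ℝ} (hw : ContinuousOn w (Icc a c))
    (ha : w a = 0) (hd : HasDerivAt w d a) (hd0 : 0 < d) {t : ℝ} (ht : t ∈ Ioc a c)
    (hwt : w t ≤ 0) : ∃ s ∈ Ioc a c, w s = 0 ∧ ∀ r ∈ Icc a s, 0 ≤ w r := by
  have h1 := (hasDerivAt_iff_tendsto_slope_left_right.1 hd).2
  have h2 : ∀ᶠ x in 𝓝[>] a, 0 < w x := by
    filter_upwards [h1.eventually (lt_mem_nhds hd0), self_mem_nhdsWithin] with x hx hxa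
    rw [slope_def_field, ha, sub_zero] at hx
    have hxa' : 0 < x - a := sub_pos.2 hxa
    exact (div_pos_iff_of_pos_right hxa').1 hx
  obtain ⟨δ, hδ, hδs⟩ := mem_nhdsGT_iff_exists_Ioo_subset.1 h2
  have htδ : δ ≤ t := by
    by_contra hc
    exact absurd (hδs ⟨ht.1, not_le.1 hc⟩) (not_lt.2 hwt)
  have haδ : a < δ := hδ
  set m := (a + δ) / 2 with hm
  have ham : a < m := by rw [hm]; linarith
  have hmδ : m < δ := by rw [hm]; linarith
  have hwm : 0 < w m := hδs ⟨ham, hmδ⟩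
  have hcm : ContinuousOn w (Icc m c) := hw.mono (Icc_subset_Icc ham.le le_rfl)
  have hK : IsCompact (Icc m c ∩ w ⁻¹' Iic 0) :=
    isCompact_Icc.of_isClosed_subset (hcm.preimage_isClosed_of_isClosed isClosed_Icc isClosed_Iic)
      inter_subset_left
  obtain ⟨s, hs⟩ := hK.exists_isLeast ⟨t, ⟨by linarith, ht.2⟩, hwt⟩
  have hsm : m ≤ s := hs.1.1.1
  have hs0 : w s = 0 := by
    obtain ⟨z, hz, hz0⟩ := intermediate_value_Icc' hsm
      (hcm.mono (Icc_subset_Icc le_rfl hs.1.1.2)) ⟨hs.1.2, hwm.le⟩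
    have := hs.2 ⟨⟨hz.1, hz.2.trans hs.1.1.2⟩, hz0.le⟩
    rw [← hz0, le_antisymm this hz.2]
  refine ⟨s, ⟨by linarith, hs.1.1.2⟩, hs0, ?_⟩
  intro r hr
  rcases eq_or_lt_of_le hr.1 with e | e
  · rw [← e, ha]
  by_cases hrm : r < δ
  · exact le_of_lt (hδs ⟨e, hrm⟩)
  rcases eq_or_lt_of_le hr.2 with e' | e'
  · rw [e', hs0]
  by_contra hc
  have := hs.2 ⟨⟨by linarith, hr.2.trans hs.1.1.2⟩, (not_le.1 hc).le⟩
  linarith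

lemma aux_unique {a b c : ℝ} (hac : a ≤ c) (hcb : c ≤ b) {q g u u₁ v v₁ : ℝ → ℝ}
    (hu : DSol a b q g u u₁) (hv : DSol a b q g v v₁)
    (hg_C1 : ContDiffOn ℝ 1 g (Set.Ici 0)) (hgc : Continuous g)
    (hm : MonotoneOn q (Icc a c)) (he : u₁ a = v₁ a) : EqOn u v (Icc a c) := by
  have hab := hac.trans hcb
  have sub : Icc a c ⊆ Icc a b := Icc_subset_Icc le_rfl hcb
  obtain ⟨M₁, hM₁⟩ := isCompact_Icc.exists_bound_of_continuousOn hu.cont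
  obtain ⟨M₂, hM₂⟩ := isCompact_Icc.exists_bound_of_continuousOn hv.cont
  obtain ⟨L, hL⟩ := (hg_C1.mono (show Icc 0 (max M₁ M₂) ⊆ Ici 0 from Icc_subset_Ici_self)).exists_lipschitzOnWith
    (by simp) (convex_Icc _ _) isCompact_Icc
  have hlip : ∀ t ∈ Icc a b, |g (u t) - g (v t)| ≤ L * |u t - v t| := by
    intro t ht
    have := hL.dist_le_mul (u t) ⟨hu.nonneg ht, ((le_abs_self _).trans (hM₁ t ht)).trans
      (le_max_left _ _)⟩ (v t) ⟨hv.nonneg ht, ((le_abs_self _).trans (hM₂ t ht)).trans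
      (le_max_right _ _)⟩
    simpa [Real.dist_eq] using this
  set Q := |q a| + |q c| with hQ
  have hQ0 : 0 ≤ Q := by positivity
  have hq : ∀ t ∈ Icc a c, |q t| ≤ Q := by
    intro t ht
    have h1 := hm ⟨le_rfl, hac⟩ ht ht.1
    have h2 := hm ht ⟨hac, le_rfl⟩ ht.2
    rw [abs_le]
    constructor
    · linarith [neg_abs_le (q a), abs_nonneg (q c)]
    · linarith [le_abs_self (q c), abs_nonneg (q a)]
  set h₀ : ℝ → ℝ := fun t => |u t - v t| + |u₁ t - v₁ t| with hh₀
  have hc₀ : ContinuousOn h₀ (Icc a b) :=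
    ((hu.cont.sub hv.cont).abs).add (((hu.cont₁ hab).sub (hv.cont₁ hab)).abs)
  set h : ℝ → ℝ := IccExtend hab ((Icc a b).domRestrict h₀) with hh
  have hhc : Continuous h := (continuousOn_iff_continuous_domRestrict.1 hc₀).Icc_extend'
  have hhe : ∀ t ∈ Icc a b, h t = h₀ t := fun t ht => IccExtend_of_mem hab _ ht
  have hh0 : ∀ t, 0 ≤ h t := by
    intro t
    exact add_nonneg (abs_nonneg _) (abs_nonneg _)
  set W : ℝ → ℝ := fun t => ∫ x in a..t, h x with hW
  have hWd : ∀ x, HasDerivAt W (h x) x := fun x =>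
    (hhc.integral_hasStrictDerivAt a x).hasDerivAt
  have hW0 : ∀ t, a ≤ t → 0 ≤ W t := fun t ht =>
    intervalIntegral.integral_nonneg ht fun x _ => hh0 x
  have ha : a ∈ Icc a b := ⟨le_rfl, hab⟩
  have b1 : ∀ t ∈ Icc a c, |u t - v t| ≤ W t := by
    intro t ht
    have hsub : uIcc a t ⊆ Icc a b := uIcc_subset_Icc ha (sub ht)
    have e : u t - v t = ∫ x in a..t, (u₁ x - v₁ x) := by
      rw [intervalIntegral.integral_sub ((hu.cont₁ hab).mono hsub).intervalIntegrable
        ((hv.cont₁ hab).mono hsub).intervalIntegrable, hu.eq₀ hab (sub ht), hv.eq₀ hab (sub ht),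
        hu.2.1, hv.2.1]
      ring
    rw [e, ← Real.norm_eq_abs]
    apply intervalIntegral.norm_integral_le_of_norm_le ht.1 _ (hhc.intervalIntegrable _ _)
    filter_upwards with x hx
    rw [hhe x (hsub (by rw [uIcc_of_le ht.1]; exact ⟨hx.1.le, hx.2⟩)), Real.norm_eq_abs]
    simp only [hh₀]
    linarith [abs_nonneg (u x - v x)]
  have b2 : ∀ t ∈ Icc a c, |u₁ t - v₁ t| ≤ Q * L * W t := by
    intro t ht
    have e : u₁ t - v₁ t = -∫ x in a..t, (q x * g (u x) - q x * g (v x)) := by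
      rw [intervalIntegral.integral_sub (hu.int' ha (sub ht)) (hv.int' ha (sub ht)),
        hu.eq (sub ht), hv.eq (sub ht), he]
      ring
    rw [e, abs_neg, ← Real.norm_eq_abs, hW, ← intervalIntegral.integral_const_mul]
    apply intervalIntegral.norm_integral_le_of_norm_le ht.1 _
      ((hhc.intervalIntegrable _ _).const_mul _)
    filter_upwards with x hx
    have hx' : x ∈ Icc a c := ⟨hx.1.le, hx.2.trans ht.2⟩
    rw [hhe x (sub hx'), Real.norm_eq_abs, ← mul_sub, abs_mul, mul_assoc]
    apply mul_le_mul (hq x hx') _ (abs_nonneg _) hQ0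
    refine (hlip x (sub hx')).trans (mul_le_mul_of_nonneg_left ?_ L.2)
    simp only [hh₀]
    linarith [abs_nonneg (u₁ x - v₁ x)]
  have gr := norm_le_gronwallBound_of_norm_deriv_right_le (f := W) (f' := h) (δ := 0)
    (K := 1 + Q * L) (ε := 0) (a := a) (b := c)
    (fun x _ => (hWd x).continuousAt.continuousWithinAt)
    (fun x _ => (hWd x).hasDerivWithinAt) (by simp [hW]) (by
      intro x hx
      have hx' : x ∈ Icc a c := ⟨hx.1, hx.2.le⟩
      rw [Real.norm_eq_abs, Real.norm_eq_abs, abs_of_nonneg (hh0 x), abs_of_nonneg (hW0 x hx.1),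
        hhe x (sub hx')]
      have := b1 x hx'
      have := b2 x hx'
      simp only [hh₀]
      linarith)
  intro t ht
  have h1 := gr t ht
  rw [gronwallBound_ε0_δ0, Real.norm_eq_abs, abs_of_nonneg (hW0 t ht.1)] at h1
  have h2 := (b1 t ht).trans h1
  exact sub_eq_zero.1 (abs_nonpos_iff.1 h2)

lemma aux_not_lt_refl {a b : ℝ} (hab : a < b) {q g u u₁ : ℝ → ℝ}
    (hu : DSol a b q g u u₁) (hgc : Continuous g) (hg : ∀ s, 0 ≤ g s)
    (hq : ∀ᵐ t, t ∈ Icc a b → 0 ≤ q t)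
    (hqs : ∀ᵐ t, t ∈ Icc a b → q t = q (a + b - t))
    (hm : MonotoneOn q (Icc a ((a + b) / 2))) : ¬ (- u₁ b < u₁ a) := by
  intro hlt
  have hv := hu.reflect hab.le hqs
  have ha : a ∈ Icc a b := ⟨le_rfl, hab.le⟩
  have hb : b ∈ Icc a b := ⟨hab.le, le_rfl⟩
  have hcb : (a + b) / 2 ≤ b := by linarith
  have hd := (hu.diff ha).sub (hv.diff ha)
  obtain ⟨s, hs, hs0, hsr⟩ := aux_first (c := (a + b) / 2) (t := (a + b) / 2)
    ((hu.cont.sub hv.cont).mono (Icc_subset_Icc le_rfl hcb))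
    (by simp [hu.2.1, hu.2.2.1]) hd (by simp; linarith) ⟨by linarith, le_rfl⟩
    (by simp only [Pi.sub_apply]; rw [show a + b - (a + b) / 2 = (a + b) / 2 by ring]; simp)
  have hs' : s ∈ Icc a b := ⟨hs.1.le, hs.2.trans hcb⟩
  have hes : u s = u (a + b - s) := sub_eq_zero.1 hs0
  have cr := aux_crossing hu hv hgc hg ⟨hs.1, hs.2.trans hcb⟩
    (hm.mono (Icc_subset_Icc le_rfl hs.2))
    (hv.rolle hg hq ha hb hab (hv.2.1.trans hv.2.2.1.symm))
    (by simpa using hlt) hes (fun t ht => sub_nonneg.1 (hsr t ht))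
  rcases eq_or_lt_of_le hs.2 with e | e
  · have := cr.1
    rw [e, show a + b - (a + b) / 2 = (a + b) / 2 by ring] at this
    simp at this
  · have hs2 : a + b - s ∈ Icc a b := ⟨by linarith [hs'.2], by linarith [hs.1]⟩
    have r1 := hu.rolle hg hq hs' hs2 (by linarith) hes
    have r2 := hv.rolle hg hq hs' hs2 (by linarith) (by simp [hes])
    nlinarith [cr.1, cr.2]

lemma aux_symm {a b : ℝ} (hab : a < b) {q g u u₁ : ℝ → ℝ}
    (hu : DSol a b q g u u₁) (hg_C1 : ContDiffOn ℝ 1 g (Set.Ici 0))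
    (hgc : Continuous g) (hg : ∀ s, 0 ≤ g s)
    (hq : ∀ᵐ t, t ∈ Icc a b → 0 ≤ q t)
    (hqs : ∀ᵐ t, t ∈ Icc a b → q t = q (a + b - t))
    (hm : MonotoneOn q (Icc a ((a + b) / 2))) :
    (∀ t ∈ Icc a b, u t = u (a + b - t)) ∧ u₁ ((a + b) / 2) = 0 := by
  have hv := hu.reflect hab.le hqs
  have h1 := aux_not_lt_refl hab hu hgc hg hq hqs hm
  have h2 := aux_not_lt_refl hab hv hgc hg hq hqs hm
  simp only [add_sub_cancel_left, add_sub_cancel_right, neg_neg] at h2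
  have he : u₁ a = - u₁ b := le_antisymm (not_lt.1 h1) (not_lt.1 h2)
  have hE := aux_unique (c := (a + b) / 2) (by linarith) (by linarith) hu hv hg_C1 hgc hm
    (by simpa using he)
  have hsym : ∀ t ∈ Icc a b, u t = u (a + b - t) := by
    intro t ht
    rcases le_total t ((a + b) / 2) with h | h
    · exact hE ⟨ht.1, h⟩
    · have := hE (x := a + b - t) ⟨by linarith [ht.2], by linarith⟩
      simp only [sub_sub_cancel] at this
      exact this.symm
  refine ⟨hsym, ?_⟩
  have hc : (a + b) / 2 ∈ Icc a b := ⟨by linarith, by linarith⟩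
  have d1 := hu.diff hc
  have d2 := hv.diff hc
  have d3 := d2.congr_of_eventuallyEq (f₁ := u) (by
    filter_upwards [Icc_mem_nhds (show a < (a + b) / 2 by linarith)
      (show (a + b) / 2 < b by linarith)] with x hx
    exact hsym x hx)
  have := d1.unique d3
  rw [show a + b - (a + b) / 2 = (a + b) / 2 by ring] at this
  linarith

lemma aux_ratio {g : ℝ → ℝ} (hg_C1 : ContDiffOn ℝ 1 g (Set.Ici 0))
    (hg_s : ∀ s > (0 : ℝ), g s / s < deriv g s) :
    StrictMonoOn (fun s => g s / s) (Ioi 0) := by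
  have hd : ∀ s > (0 : ℝ), HasDerivAt (fun s => g s / s) ((deriv g s * s - g s * 1) / s ^ 2) s := by
    intro s hs
    have : DifferentiableAt ℝ g s :=
      ((hg_C1.differentiableOn (by simp)) s (mem_Ici.2 (le_of_lt hs))).differentiableAt
        (Ici_mem_nhds hs)
    exact this.hasDerivAt.div (hasDerivAt_id s) (ne_of_gt hs)
  apply strictMonoOn_of_deriv_pos (convex_Ioi 0)
  · intro s hs
    exact (hd s hs).continuousAt.continuousWithinAt
  · intro s hs
    rw [interior_Ioi] at hs
    have hs0 : 0 < s := hs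
    rw [(hd s hs).deriv]
    have := (div_lt_iff₀ hs0).1 (hg_s s hs)
    apply div_pos _ (by positivity)
    linarith

lemma aux_main {a b : ℝ} (hab : a < b) {q g u u₁ v v₁ : ℝ → ℝ}
    (hu : DSol a b q g u u₁) (hv : DSol a b q g v v₁)
    (hg_C1 : ContDiffOn ℝ 1 g (Set.Ici 0))
    (hg_s : ∀ s > (0 : ℝ), g s / s < deriv g s)
    (hgc : Continuous g) (hg : ∀ s, 0 ≤ g s)
    (hq : ∀ᵐ t, t ∈ Icc a b → 0 ≤ q t)
    (hqs : ∀ᵐ t, t ∈ Icc a b → q t = q (a + b - t))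
    (hq_ne : ¬ (∀ᵐ t, t ∈ Icc a b → q t = 0))
    (hm : MonotoneOn q (Icc a ((a + b) / 2))) : ¬ (v₁ a < u₁ a) := by
  intro hlt
  obtain ⟨-, su⟩ := aux_symm hab hu hg_C1 hgc hg hq hqs hm
  obtain ⟨-, sv⟩ := aux_symm hab hv hg_C1 hgc hg hq hqs hm
  set c := (a + b) / 2 with hc
  have hac : a < c := by rw [hc]; linarith
  have hcb : c < b := by rw [hc]; linarith
  have ha : a ∈ Icc a b := ⟨le_rfl, hab.le⟩
  have hb : b ∈ Icc a b := ⟨hab.le, le_rfl⟩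
  have hcm : c ∈ Icc a b := ⟨hac.le, hcb.le⟩
  have sub : Icc a c ⊆ Icc a b := Icc_subset_Icc le_rfl hcb.le
  have hgt : ∀ t ∈ Ioc a c, v t < u t := by
    intro t ht
    by_contra hcon
    obtain ⟨s, hs, hs0, hsr⟩ := aux_first (c := c) (t := t)
      ((hu.cont.sub hv.cont).mono sub)
      (by simp [hu.2.1, hv.2.1]) ((hu.diff ha).sub (hv.diff ha)) (by linarith) ht
      (by simp only [Pi.sub_apply]; linarith)
    have hs' : s ∈ Icc a b := sub ⟨hs.1.le, hs.2⟩
    have cr := aux_crossing hu hv hgc hg ⟨hs.1, hs'.2⟩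
      (hm.mono (Icc_subset_Icc le_rfl hs.2))
      (hv.rolle hg hq ha hb hab (hv.2.1.trans hv.2.2.1.symm))
      hlt (sub_eq_zero.1 hs0) (fun t ht => sub_nonneg.1 (hsr t ht))
    have r1 := hu.anti hg hq hs' hcm hs.2
    have r2 := hv.anti hg hq hs' hcm hs.2
    nlinarith [cr.1, cr.2]
  have wr : ∀ {u u₁ v v₁ : ℝ → ℝ}, DSol a b q g u u₁ → DSol a b q g v v₁ → u₁ c = 0 →
      ∫ x in a..c, (u₁ x * v₁ x - q x * g (u x) * v x) = 0 := by
    intro u u₁ v v₁ hu hv su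
    have hcv : ContinuousOn v₁ (uIcc a c) := by
      rw [uIcc_of_le hac.le]; exact (hv.cont₁ hab.le).mono sub
    have := aux_parts hac.le (hu.int' ha hcm).neg hcv.intervalIntegrable
      (F := u₁) (H := v) (by
        intro t ht
        simp only [Pi.neg_apply]
        rw [hu.eq (sub ht), intervalIntegral.integral_neg]
        ring) (fun t ht => hv.eq₀ hab.le (sub ht))
    rw [su, hv.2.1] at this
    simp only [Pi.neg_apply, zero_mul, mul_zero, sub_zero] at this
    rw [← this]
    congr 1; ext x; ring
  have i1 : ∀ {u u₁ v v₁ : ℝ → ℝ}, DSol a b q g u u₁ → DSol a b q g v v₁ →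
      IntervalIntegrable (fun x => u₁ x * v₁ x - q x * g (u x) * v x) volume a c := by
    intro u u₁ v v₁ hu hv
    refine IntervalIntegrable.sub (ContinuousOn.intervalIntegrable ?_)
      ((hu.int' ha hcm).mul_continuousOn ?_)
    · rw [uIcc_of_le hac.le]; exact ((hu.cont₁ hab.le).mul (hv.cont₁ hab.le)).mono sub
    · rw [uIcc_of_le hac.le]; exact hv.cont.mono sub
  have z : ∫ x in a..c, q x * (g (u x) * v x - g (v x) * u x) = 0 := by
    have := intervalIntegral.integral_sub (i1 hv hu) (i1 hu hv)
    rw [wr hu hv su, wr hv hu sv, sub_zero] at this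
    rw [← this]
    congr 1; ext x; ring
  have zi : IntervalIntegrable (fun x => q x * (g (u x) * v x - g (v x) * u x)) volume a c := by
    refine ((i1 hv hu).sub (i1 hu hv)).congr ?_
    intro x _
    simp only [Pi.sub_apply]
    ring
  have pos : ∀ t ∈ Ioc a c, 0 < g (u t) * v t - g (v t) * u t := by
    intro t ht
    have vp : 0 < v t := hv.2.2.2 t ⟨ht.1, ht.2.trans_lt hcb⟩
    have up : 0 < u t := hu.2.2.2 t ⟨ht.1, ht.2.trans_lt hcb⟩
    have := aux_ratio hg_C1 hg_s (mem_Ioi.2 vp) (mem_Ioi.2 up) (hgt t ht)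
    simp only at this
    rw [div_lt_div_iff₀ vp up] at this
    linarith
  have nn : 0 ≤ᵐ[volume.restrict (Ioc a c)] fun x => q x * (g (u x) * v x - g (v x) * u x) := by
    rw [EventuallyLE, ae_restrict_iff' measurableSet_Ioc]
    filter_upwards [hq] with x hx hxx
    exact mul_nonneg (hx (sub ⟨hxx.1.le, hxx.2⟩)) (pos x hxx).le
  have z0 := (intervalIntegral.integral_eq_zero_iff_of_le_of_nonneg_ae hac.le nn zi).1 z
  rw [EventuallyEq, ae_restrict_iff' measurableSet_Ioc] at z0
  have z1 : ∀ᵐ t, t ∈ Ioc a c → q t = 0 := by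
    filter_upwards [z0] with x hx hxx
    exact (mul_eq_zero.1 (hx hxx)).resolve_right (pos x hxx).ne'
  have z2 : ∀ᵐ t, a + b - t ∈ Ioc a c → q (a + b - t) = 0 :=
    (Measure.measurePreserving_sub_left volume (a + b)).quasiMeasurePreserving.ae z1
  have nea : ∀ᵐ t : ℝ, t ≠ a := Measure.ae_ne volume a
  have neb : ∀ᵐ t : ℝ, t ≠ b := Measure.ae_ne volume b
  apply hq_ne
  filter_upwards [z1, z2, nea, neb, hqs] with t h1 h2 h3 h4 h5 ht
  rcases le_total t c with h | h
  · exact h1 ⟨lt_of_le_of_ne ht.1 (Ne.symm h3), h⟩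
  · rw [h5 ht]
    have := lt_of_le_of_ne ht.2 h4
    exact h2 ⟨by linarith, by linarith⟩

lemma aux_g_cont {g : ℝ → ℝ} (hg_C1 : ContDiffOn ℝ 1 g (Set.Ici 0))
    (hg_ext : ∀ s ≤ (0 : ℝ), g s = 0) : Continuous g := by
  rw [← continuousOn_univ, ← Iic_union_Ici (a := (0 : ℝ))]
  refine ContinuousOn.union_of_isClosed ?_ hg_C1.continuousOn isClosed_Iic isClosed_Ici
  exact (continuousOn_const (c := (0 : ℝ))).congr fun s hs => hg_ext s hs

/-- **Uniqueness for the Dirichlet problem with symmetric BV weight.**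
If `q ∈ BV([a,b])`, `q ≥ 0` a.e., `q ≢ 0`, `q` is symmetric about `c = (a+b)/2`
and non-decreasing on `[a,c]`, and `g` satisfies `(g₊)` and `(g_s)`, then the
Dirichlet problem `u'' + q(t) g(u) = 0`, `u(a) = 0 = u(b)`, has at most one
positive solution. -/
theorem uniqueness_dirichlet_symmetric_bv
    (a b : ℝ) (hab : a < b)
    (g : ℝ → ℝ)
    (hg_C1 : ContDiffOn ℝ 1 g (Set.Ici 0))
    (hg0 : g 0 = 0)
    (hg_pos : ∀ s > 0, 0 < g s)
    (hg_ext : ∀ s ≤ (0 : ℝ), g s = 0)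
    (hg_s : ∀ s > (0 : ℝ), g s / s < deriv g s)
    (q : ℝ → ℝ)
    (hq_bv : BoundedVariationOn q (Set.Icc a b))
    (hq_int : IntegrableOn q (Set.Icc a b))
    (hq_nonneg : ∀ᵐ t ∂(volume.restrict (Set.Icc a b)), 0 ≤ q t)
    (hq_ne : ¬ (∀ᵐ t ∂(volume.restrict (Set.Icc a b)), q t = 0))
    (hq_symm : ∀ᵐ t ∂(volume.restrict (Set.Icc a b)), q t = q (a + b - t))
    (hq_mono : MonotoneOn q (Set.Icc a ((a + b) / 2))) :
    ∀ u u₁ v v₁ : ℝ → ℝ,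
      IsCaraSol a b (fun s x => q s * g x) u u₁ → u a = 0 → u b = 0 →
        (∀ t ∈ Set.Ioo a b, 0 < u t) →
      IsCaraSol a b (fun s x => q s * g x) v v₁ → v a = 0 → v b = 0 →
        (∀ t ∈ Set.Ioo a b, 0 < v t) →
      Set.EqOn u v (Set.Icc a b) := by
  intro u u₁ v v₁ hu hua hub hup hv hva hvb hvp
  have Hu : DSol a b q g u u₁ := ⟨hu, hua, hub, hup⟩
  have Hv : DSol a b q g v v₁ := ⟨hv, hva, hvb, hvp⟩
  rw [ae_restrict_iff' measurableSet_Icc] at hq_nonneg hq_ne hq_symm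
  have hgc := aux_g_cont hg_C1 hg_ext
  have hg : ∀ s, 0 ≤ g s := by
    intro s
    rcases le_or_gt s 0 with h | h
    · exact (hg_ext s h).ge
    · exact (hg_pos s h).le
  have h1 := aux_main hab Hu Hv hg_C1 hg_s hgc hg hq_nonneg hq_symm hq_ne hq_mono
  have h2 := aux_main hab Hv Hu hg_C1 hg_s hgc hg hq_nonneg hq_symm hq_ne hq_mono
  have he : u₁ a = v₁ a := le_antisymm (not_lt.1 h1) (not_lt.1 h2)
  have hE := aux_unique (c := (a + b) / 2) (by linarith) (by linarith) Hu Hv hg_C1 hgc hq_mono he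
  obtain ⟨su, -⟩ := aux_symm hab Hu hg_C1 hgc hg hq_nonneg hq_symm hq_mono
  obtain ⟨sv, -⟩ := aux_symm hab Hv hg_C1 hgc hg hq_nonneg hq_symm hq_mono
  intro t ht
  rcases le_total t ((a + b) / 2) with h | h
  · exact hE ⟨ht.1, h⟩
  · rw [su t ht, sv t ht]
    exact hE ⟨by linarith [ht.2], by linarith⟩
end
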